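/- arXiv:1604.08053 — 2 statements merged into one kernel-verified Lean document; each statement's English description precedes it below -/
import Mathlib

section
/- Every flow-admissible signed cubic graph (G, σ) with exactly two negative edges n₁ and n₂ admits a nowhere-zero 7-flow (D, φ) with φ(n₁) = φ(n₂) = 1 and such that all edges with flow value 6 lie on a single path. -/
theorem z3_choice : ∀ N a b : ZMod 3, a ≠ 0 → b ≠ 0 → ∃ c d : ZMod 3, (c = 0 ∨ c = 1) ∧ (d = 0 ∨ d = 1) ∧
    N + a * c + b * d = 0 := by decide

theorem z3_lift' (a : ZMod 3) : ∃ z : ℤ, -1 ≤ z ∧ z ≤ 1 ∧ (z : ZMod 3) = a := by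
  revert a
  intro a
  fin_cases a
  · exact ⟨0, by norm_num, by norm_num, by rfl⟩
  · exact ⟨1, by norm_num, by norm_num, by rfl⟩
  · exact ⟨-1, by norm_num, by norm_num, by rfl⟩

theorem z2_lift' (a : ZMod 2) : ∃ z : ℤ, 0 ≤ z ∧ z ≤ 1 ∧ (z : ZMod 2) = a := by
  fin_cases a
  · exact ⟨0, by norm_num, by norm_num, by rfl⟩
  · exact ⟨1, by norm_num, by norm_num, by rfl⟩

theorem z3_neg : ∀ a : ZMod 3, a ≠ 0 → a = 1 ∨ -a = 1 := by decide
theorem z3_c : ∀ c : ZMod 3, (c = 0 ∨ c = 1) → 1 + c ≠ 0 := by decide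

open Finset SimpleGraph

attribute [local instance] Classical.propDecidable

variable {V : Type}

/-- `σ` is a valid `±1` signature on the edges of `G`. -/
def IsSignature (G : SimpleGraph V) (σ : Sym2 V → ℤ) : Prop :=
  ∀ e ∈ G.edgeSet, σ e = 1 ∨ σ e = -1

/-- The set of negative edges of the signed graph `(G, σ)`. -/
def NegEdges (G : SimpleGraph V) (σ : Sym2 V → ℤ) : Set (Sym2 V) :=
  {e | e ∈ G.edgeSet ∧ σ e = -1}

/-- A bidirected orientation of the signed graph `(G, σ)`: `τ v e = 1` means that the
half-edge of `e` at `v` points towards `v`, and `τ v e = -1` that it points away from `v`.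
On a positive edge the two half-edges are directed consistently, while on a negative edge
both half-edges point outwards (extroverted) or both point inwards (introverted). -/
def IsOrientation (G : SimpleGraph V) (σ : Sym2 V → ℤ) (τ : V → Sym2 V → ℤ) : Prop :=
  (∀ v e, τ v e = 1 ∨ τ v e = -1) ∧
  ∀ u v, G.Adj u v → τ u s(u, v) * τ v s(u, v) = - σ s(u, v)

/-- `(τ, φ)` is an integer-valued flow on the signed graph `(G, σ)`:
Kirchhoff's law holds at every vertex. -/
def IsFlow [Fintype V] (G : SimpleGraph V) (σ : Sym2 V → ℤ)
    (τ : V → Sym2 V → ℤ) (φ : Sym2 V → ℤ) : Prop :=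
  IsOrientation G σ τ ∧
    ∀ v : V, (∑ w : V, if G.Adj v w then τ v s(v, w) * φ s(v, w) else 0) = 0

/-- `(τ, φ)` is a nowhere-zero `k`-flow on `(G, σ)`. -/
def IsNZFlow [Fintype V] (G : SimpleGraph V) (σ : Sym2 V → ℤ) (k : ℤ)
    (τ : V → Sym2 V → ℤ) (φ : Sym2 V → ℤ) : Prop :=
  IsFlow G σ τ φ ∧ ∀ e ∈ G.edgeSet, 0 < |φ e| ∧ |φ e| < k

/-- A signed graph is flow-admissible if it admits a nowhere-zero `k`-flow for some `k`. -/
def FlowAdmissible [Fintype V] (G : SimpleGraph V) (σ : Sym2 V → ℤ) : Prop :=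
  ∃ (k : ℤ) (τ : V → Sym2 V → ℤ) (φ : Sym2 V → ℤ), IsNZFlow G σ k τ φ

/-- The flow number `F(G, σ)`: the least `k` admitting a nowhere-zero `k`-flow. -/
noncomputable def flowNumber [Fintype V] (G : SimpleGraph V) (σ : Sym2 V → ℤ) : ℕ :=
  sInf {k : ℕ | ∃ τ φ, IsNZFlow G σ (k : ℤ) τ φ}

/-- An edge-cut of `G`: the set of edges crossing a nontrivial vertex partition. -/
def IsEdgeCut (G : SimpleGraph V) (X : Set (Sym2 V)) : Prop :=
  ∃ S : Set V, S.Nonempty ∧ Sᶜ.Nonempty ∧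
    X = {e | e ∈ G.edgeSet ∧ ∃ a ∈ S, ∃ b ∈ Sᶜ, e = s(a, b)}

/-- The all-positive signature. -/
def allPos : Sym2 V → ℤ := fun _ => 1

/-- `G` is cubic (3-regular). -/
def CubicGraph (G : SimpleGraph V) : Prop := ∀ v : V, (G.neighborSet v).ncard = 3

/-- `G` has no bridge. -/
def Bridgeless (G : SimpleGraph V) : Prop := ∀ e ∈ G.edgeSet, ¬ G.IsBridge e

/-- A walk is directed (with respect to the orientation `τ` of `(G, σ)`) if every dart of
the walk traverses a positive edge in the direction of its orientation. -/
def IsDirectedWalk {G : SimpleGraph V} (σ : Sym2 V → ℤ) (τ : V → Sym2 V → ℤ) {u v : V}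
    (p : G.Walk u v) : Prop :=
  ∀ d ∈ p.darts, σ s(d.toProd.1, d.toProd.2) = 1 ∧
    τ d.toProd.2 s(d.toProd.1, d.toProd.2) = 1

/-- `M` is a perfect matching (1-factor) of `G`. -/
def IsPM (G : SimpleGraph V) (M : Set (Sym2 V)) : Prop :=
  M ⊆ G.edgeSet ∧ ∀ v : V, ∃! e, e ∈ M ∧ v ∈ e

/-- `c` is a proper 3-edge-coloring of `G`. -/
def IsProper3EdgeColoring (G : SimpleGraph V) (c : Sym2 V → Fin 3) : Prop :=
  ∀ e₁ ∈ G.edgeSet, ∀ e₂ ∈ G.edgeSet, e₁ ≠ e₂ → (∃ w, w ∈ e₁ ∧ w ∈ e₂) → c e₁ ≠ c e₂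



/-- net outflow -/
noncomputable def bd {E A : Type} [Fintype E] [AddCommGroup A] (s t : E → V) (f : E → A) (v : V) : A :=
  ∑ e, ((if s e = v then f e else 0) - (if t e = v then f e else 0))

section multi
variable {E A : Type} [Fintype E] [AddCommGroup A] (s t : E → V)

theorem bd_add (f g : E → A) (v : V) : bd s t (fun e => f e + g e) v = bd s t f v + bd s t g v := by
  unfold bd
  rw [← Finset.sum_add_distrib]
  refine Finset.sum_congr rfl fun e _ => ?_
  split_ifs <;> simp [add_comm]

theorem bd_neg (f : E → A) (v : V) : bd s t (fun e => - f e) v = - bd s t f v := by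
  unfold bd
  rw [← Finset.sum_neg_distrib]
  refine Finset.sum_congr rfl fun e _ => ?_
  split_ifs <;> simp [add_comm]

theorem bd_sum {ι : Type} (I : Finset ι) (f : ι → E → A) (v : V) :
    bd s t (fun e => ∑ i ∈ I, f i e) v = ∑ i ∈ I, bd s t (f i) v := by
  unfold bd
  rw [Finset.sum_comm]
  refine Finset.sum_congr rfl fun e _ => ?_
  rw [Finset.sum_sub_distrib]
  split_ifs <;> simp

theorem bd_map {B : Type} [AddCommGroup B] (φ : A →+ B) (f : E → A) (v : V) :
    bd s t (fun e => φ (f e)) v = φ (bd s t f v) := by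
  unfold bd
  rw [map_sum]
  refine Finset.sum_congr rfl fun e _ => ?_
  split_ifs <;> simp

theorem bd_mul (c : ℤ) (f : E → ℤ) (v : V) :
    bd s t (fun e => c * f e) v = c * bd s t f v := by
  unfold bd
  rw [Finset.mul_sum]
  refine Finset.sum_congr rfl fun e _ => ?_
  split_ifs <;> ring

theorem bd_congr (f g : E → A) (v : V) (h : ∀ e, s e = v ∨ t e = v → f e = g e) :
    bd s t f v = bd s t g v := by
  unfold bd
  refine Finset.sum_congr rfl fun e _ => ?_
  split_ifs with h1 h2 h2
  · simp
  · rw [h e (Or.inl h1)]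
  · rw [h e (Or.inr h2)]
  · rfl

theorem bd_single (a : E) (c : A) (v : V) :
    bd s t (fun e => if e = a then c else 0) v =
      (if v = s a then c else 0) - (if v = t a then c else 0) := by
  unfold bd
  rw [Finset.sum_eq_single a]
  · simp [eq_comm]
  · intro b _ hb; simp [hb]
  · simp

theorem sum_bd (f : E → A) (S : Finset V) :
    ∑ v ∈ S, bd s t f v = ∑ e, ((if s e ∈ S then f e else 0) - (if t e ∈ S then f e else 0)) := by
  unfold bd
  rw [Finset.sum_comm]
  refine Finset.sum_congr rfl fun e _ => ?_
  rw [Finset.sum_sub_distrib]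
  simp

theorem sum_bd_univ [Fintype V] (f : E → A) : ∑ v, bd s t f v = 0 := by
  rw [sum_bd]; simp

/-- edges crossing `S` -/
noncomputable def cross (S : Finset V) : Finset E :=
  Finset.univ.filter fun e => ¬ (s e ∈ S ↔ t e ∈ S)

theorem mem_cross (S : Finset V) (e : E) : e ∈ cross s t S ↔ ¬ (s e ∈ S ↔ t e ∈ S) := by
  simp [cross]

theorem sum_bd_cross (f : E → A) (S : Finset V) :
    ∑ v ∈ S, bd s t f v = ∑ e ∈ cross s t S, (if s e ∈ S then f e else - f e) := by
  rw [sum_bd, cross, Finset.sum_filter]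
  refine Finset.sum_congr rfl fun e _ => ?_
  by_cases h1 : s e ∈ S <;> by_cases h2 : t e ∈ S <;> simp [h1, h2]

theorem hoffman_aux [Fintype V] (b : V → ℤ) (hb : ∑ v, b v = 0) (n : ℕ) : ∀ (l u : E → ℤ),
    (∀ e, l e ≤ u e) → (∑ e, (u e - l e) = n) →
    (∀ S : Finset V, ∑ v ∈ S, b v ≤
      ∑ e, (if s e ∈ S ∧ t e ∉ S then u e else if s e ∉ S ∧ t e ∈ S then - l e else 0)) →
    ∃ x : E → ℤ, (∀ e, l e ≤ x e ∧ x e ≤ u e) ∧ ∀ v, bd s t x v = b v := by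
  induction n with
  | zero =>
    intro l u hlu hn h
    have heq : ∀ e, u e = l e := by
      have := (Finset.sum_eq_zero_iff_of_nonneg (s := Finset.univ) (f := fun e => u e - l e)
        (fun e _ => by have := hlu e; linarith)).1 (by simpa using hn)
      intro e; have := this e (Finset.mem_univ e); linarith
    have key : ∀ S : Finset V, ∑ v ∈ S, b v ≤ ∑ v ∈ S, bd s t u v := by
      intro S
      refine (h S).trans (le_of_eq ?_)
      rw [sum_bd]
      refine Finset.sum_congr rfl fun e _ => ?_
      rw [heq e]
      by_cases h1 : s e ∈ S <;> by_cases h2 : t e ∈ S <;> simp [h1, h2]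
    refine ⟨u, fun e => ⟨hlu e, le_rfl⟩, ?_⟩
    have hle : ∀ v, b v ≤ bd s t u v := fun v => by simpa using key {v}
    have hz : ∑ v, b v = ∑ v, bd s t u v := by rw [hb, sum_bd_univ]
    intro v
    exact ((Finset.sum_eq_sum_iff_of_le (fun v _ => hle v)).1 hz v (Finset.mem_univ v)).symm
  | succ n ih =>
    intro l u hlu hn h
    have hex : ∃ e, l e < u e := by
      by_contra hcon
      push Not at hcon
      have : ∑ e, (u e - l e) ≤ 0 := Finset.sum_nonpos fun e _ => by have := hcon e; linarith
      push_cast at hn; linarith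
    obtain ⟨a, ha⟩ := hex
    by_cases h1 : ∀ S : Finset V, ∑ v ∈ S, b v ≤
      ∑ e, (if s e ∈ S ∧ t e ∉ S then (u e - if e = a then 1 else 0) else
        if s e ∉ S ∧ t e ∈ S then - l e else 0)
    · obtain ⟨x, hx, hx'⟩ := ih l (fun e => u e - if e = a then 1 else 0)
        (fun e => by by_cases he : e = a
                     · subst he; simp; omega
                     · simpa [he] using hlu e)
        (by
          have : ∑ e, ((u e - if e = a then 1 else 0) - l e) = ∑ e, (u e - l e) - ∑ e, (if e = a then (1:ℤ) else 0) := by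
            rw [← Finset.sum_sub_distrib]; exact Finset.sum_congr rfl fun e _ => by ring
          rw [this, hn]; simp) h1
      refine ⟨x, fun e => ⟨(hx e).1, (hx e).2.trans ?_⟩, hx'⟩
      split_ifs <;> omega
    by_cases h2 : ∀ S : Finset V, ∑ v ∈ S, b v ≤
      ∑ e, (if s e ∈ S ∧ t e ∉ S then u e else
        if s e ∉ S ∧ t e ∈ S then - (l e + if e = a then 1 else 0) else 0)
    · obtain ⟨x, hx, hx'⟩ := ih (fun e => l e + if e = a then 1 else 0) u
        (fun e => by by_cases he : e = a
                     · subst he; simp; omega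
                     · simpa [he] using hlu e)
        (by
          have : ∑ e, (u e - (l e + if e = a then 1 else 0)) = ∑ e, (u e - l e) - ∑ e, (if e = a then (1:ℤ) else 0) := by
            rw [← Finset.sum_sub_distrib]; exact Finset.sum_congr rfl fun e _ => by ring
          rw [this, hn]; simp) h2
      refine ⟨x, fun e => ⟨le_trans ?_ (hx e).1, (hx e).2⟩, hx'⟩
      split_ifs <;> omega
    exfalso
    push Not at h1 h2
    obtain ⟨S, hS⟩ := h1
    obtain ⟨T, hT⟩ := h2
    have hU := h (S ∪ T)
    have hI := h (S ∩ T)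
    have hsum : ∑ v ∈ S ∪ T, b v + ∑ v ∈ S ∩ T, b v = ∑ v ∈ S, b v + ∑ v ∈ T, b v :=
      Finset.sum_union_inter
    have hS0 := h S
    have hT0 := h T
    have haS : s a ∈ S ∧ t a ∉ S := by
      by_contra hcon
      refine absurd hS0 (not_le.2 (lt_of_le_of_lt (le_of_eq ?_) hS))
      refine Finset.sum_congr rfl fun e _ => ?_
      by_cases he : e = a
      · subst he; simp [hcon]
      · simp [he]
    have haT : s a ∉ T ∧ t a ∈ T := by
      by_contra hcon
      refine absurd hT0 (not_le.2 (lt_of_le_of_lt (le_of_eq ?_) hT))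
      refine Finset.sum_congr rfl fun e _ => ?_
      by_cases he : e = a
      · subst he; simp [hcon]
      · simp [he]
    have e1 : ∑ e, (if s e ∈ S ∧ t e ∉ S then (u e - if e = a then 1 else 0) else
        if s e ∉ S ∧ t e ∈ S then - l e else 0) =
        ∑ e, (if s e ∈ S ∧ t e ∉ S then u e else
        if s e ∉ S ∧ t e ∈ S then - l e else 0) - 1 := by
      have : (1:ℤ) = ∑ e, (if e = a then (1:ℤ) else 0) := by simp
      rw [this, ← Finset.sum_sub_distrib]
      refine Finset.sum_congr rfl fun e _ => ?_
      by_cases he : e = a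
      · subst he; simp [haS]
      · simp [he]
    have e2 : ∑ e, (if s e ∈ T ∧ t e ∉ T then u e else
        if s e ∉ T ∧ t e ∈ T then - (l e + if e = a then 1 else 0) else 0) =
        ∑ e, (if s e ∈ T ∧ t e ∉ T then u e else
        if s e ∉ T ∧ t e ∈ T then - l e else 0) - 1 := by
      have : (1:ℤ) = ∑ e, (if e = a then (1:ℤ) else 0) := by simp
      rw [this, ← Finset.sum_sub_distrib]
      refine Finset.sum_congr rfl fun e _ => ?_
      by_cases he : e = a
      · subst he; simp [haT]; ring
      · simp [he]
    rw [e1] at hS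
    rw [e2] at hT
    have hlt : ∑ e, (if s e ∈ S ∪ T ∧ t e ∉ S ∪ T then u e else if s e ∉ S ∪ T ∧ t e ∈ S ∪ T then - l e else 0)
      + ∑ e, (if s e ∈ S ∩ T ∧ t e ∉ S ∩ T then u e else if s e ∉ S ∩ T ∧ t e ∈ S ∩ T then - l e else 0)
      < ∑ e, (if s e ∈ S ∧ t e ∉ S then u e else if s e ∉ S ∧ t e ∈ S then - l e else 0) +
      ∑ e, (if s e ∈ T ∧ t e ∉ T then u e else if s e ∉ T ∧ t e ∈ T then - l e else 0) := by
      rw [← Finset.sum_add_distrib, ← Finset.sum_add_distrib]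
      refine Finset.sum_lt_sum ?_ ⟨a, Finset.mem_univ a, ?_⟩
      · intro e _
        have := hlu e
        by_cases h1 : s e ∈ S <;> by_cases h2 : t e ∈ S <;> by_cases h3 : s e ∈ T <;>
          by_cases h4 : t e ∈ T <;> simp [h1, h2, h3, h4] <;> omega
      · simp [haS, haT]; omega
    omega

theorem hoffman [Fintype V] (b : V → ℤ) (hb : ∑ v, b v = 0) (l u : E → ℤ)
    (hlu : ∀ e, l e ≤ u e)
    (h : ∀ S : Finset V, ∑ v ∈ S, b v ≤
      ∑ e, (if s e ∈ S ∧ t e ∉ S then u e else if s e ∉ S ∧ t e ∈ S then - l e else 0)) :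
    ∃ x : E → ℤ, (∀ e, l e ≤ x e ∧ x e ≤ u e) ∧ ∀ v, bd s t x v = b v := by
  have h0 : 0 ≤ ∑ e, (u e - l e) := Finset.sum_nonneg fun e _ => by have := hlu e; linarith
  exact hoffman_aux s t b hb (∑ e, (u e - l e)).toNat l u hlu (by rw [Int.toNat_of_nonneg h0]) h

/-- adjacency through the support of `h` -/
def sAdj {B : Type} [Zero B] (h : E → B) (u v : V) : Prop :=
  ∃ e, h e ≠ 0 ∧ ((s e = u ∧ t e = v) ∨ (t e = u ∧ s e = v))

theorem conn_fix {B : Type} [Zero B] (h : E → B) (K : Finset V) (r : V) 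
    (hK : ∀ v ∈ K, Relation.ReflTransGen (sAdj s t h) r v) (c : V → A) (hc : ∑ v ∈ K, c v = 0) :
    ∃ x : E → A, (∀ e, h e = 0 → x e = 0) ∧ ∀ v, bd s t x v = if v ∈ K then c v else 0 := by
  have h1 : ∀ v, Relation.ReflTransGen (sAdj s t h) r v → ∀ a : A, ∃ x : E → A, (∀ e, h e = 0 → x e = 0) ∧
      ∀ w, bd s t x w = (if w = v then a else 0) - (if w = r then a else 0) := by
    intro v hv
    induction hv with
    | refl => intro a; exact ⟨fun _ => 0, by simp, by simp [bd]⟩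
    | tail _ hst ih =>
      intro a
      rename_i p q _
      obtain ⟨x, hx, hx'⟩ := ih a
      obtain ⟨e, he, hh | hh⟩ := hst
      · refine ⟨fun e' => x e' + if e' = e then -a else 0, ?_, ?_⟩
        · intro e' he'
          have : e' ≠ e := by rintro rfl; exact he he'
          simp [this, hx e' he']
        · intro w
          rw [bd_add, bd_single, hx', hh.1, hh.2]
          split_ifs <;> abel
      · refine ⟨fun e' => x e' + if e' = e then a else 0, ?_, ?_⟩
        · intro e' he'
          have : e' ≠ e := by rintro rfl; exact he he'
          simp [this, hx e' he']
        · intro w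
          rw [bd_add, bd_single, hx', hh.1, hh.2]
          split_ifs <;> abel
  have h2 : ∀ v : V, ∃ x : E → A, v ∈ K → (∀ e, h e = 0 → x e = 0) ∧
      ∀ w, bd s t x w = (if w = v then c v else 0) - (if w = r then c v else 0) := by
    intro v
    by_cases hv : v ∈ K
    · obtain ⟨x, hx⟩ := h1 v (hK v hv) (c v)
      exact ⟨x, fun _ => hx⟩
    · exact ⟨fun _ => 0, fun h => absurd h hv⟩
  choose x hx using h2
  refine ⟨fun e => ∑ v ∈ K, x v e, ?_, ?_⟩
  · intro e he
    exact Finset.sum_eq_zero fun v hv => (hx v hv).1 e he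
  · intro w
    rw [bd_sum, Finset.sum_congr rfl (fun v hv => (hx v hv).2 w), Finset.sum_sub_distrib]
    have : ∑ v ∈ K, (if w = r then c v else 0) = 0 := by
      split_ifs
      · exact hc
      · simp
    rw [this]; simp

/-- the component of `r` in the support of `g` -/
noncomputable def comp [Fintype V] (g : E → ℤ) (r : V) : Finset V :=
  Finset.univ.filter fun v => Relation.ReflTransGen (sAdj s t g) r v

theorem mem_comp [Fintype V] (g : E → ℤ) (r v : V) :
    v ∈ comp s t g r ↔ Relation.ReflTransGen (sAdj s t g) r v := by simp [comp]

theorem comp_closed [Fintype V] (g : E → ℤ) (r : V) (e : E) (he : g e ≠ 0) :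
    s e ∈ comp s t g r ↔ t e ∈ comp s t g r := by
  rw [mem_comp, mem_comp]
  exact ⟨fun h => h.tail ⟨e, he, Or.inl ⟨rfl, rfl⟩⟩, fun h => h.tail ⟨e, he, Or.inr ⟨rfl, rfl⟩⟩⟩

/-- connected even subgraph through `p` and `q` inside `U`. -/
theorem even_conn [Fintype V] (U : Finset V) (p q : V) (hp : p ∈ U)
    (hcut : ∀ S : Finset V, p ∈ S → q ∉ S →
      2 ≤ ((cross s t S).filter fun e => s e ∈ U ∧ t e ∈ U).card) :
    ∃ (h : E → ZMod 2) (K : Finset V), K ⊆ U ∧ p ∈ K ∧ q ∈ K ∧ (∀ v, bd s t h v = 0) ∧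
      (∀ e, h e ≠ 0 → s e ∈ K ∧ t e ∈ K) ∧
      ∀ v ∈ K, Relation.ReflTransGen (sAdj s t h) p v := by
  obtain ⟨g, hg, hbd⟩ := hoffman s t (fun v => (if v = p then 2 else 0) - (if v = q then 2 else 0)) (by simp)
    (fun e => if s e ∈ U ∧ t e ∈ U then -1 else 0) (fun e => if s e ∈ U ∧ t e ∈ U then 1 else 0)
    (fun e => by split_ifs <;> norm_num) (by
      intro S
      have hR : ∑ e, (if s e ∈ S ∧ t e ∉ S then (if s e ∈ U ∧ t e ∈ U then (1:ℤ) else 0) else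
          if s e ∉ S ∧ t e ∈ S then - (if s e ∈ U ∧ t e ∈ U then (-1:ℤ) else 0) else 0)
          = (((cross s t S).filter fun e => s e ∈ U ∧ t e ∈ U).card : ℤ) := by
        rw [Finset.card_filter, cross, Finset.sum_filter]
        push_cast
        refine Finset.sum_congr rfl fun e _ => ?_
        by_cases h1 : s e ∈ S <;> by_cases h2 : t e ∈ S <;> simp [h1, h2]
        split_ifs <;> simp
      rw [hR, Finset.sum_sub_distrib]
      by_cases h1 : p ∈ S <;> by_cases h2 : q ∈ S
      · simp [h1, h2]
      · have := hcut S h1 h2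
        simp [h1, h2]; exact_mod_cast this
      · simp [h1, h2]
      · simp [h1, h2])
  have hins : ∀ e, g e ≠ 0 → s e ∈ U ∧ t e ∈ U := by
    intro e he
    by_contra hcon
    have := hg e
    simp only [hcon, if_false] at this
    omega
  set K := comp s t g p with hKdef
  have hpK : p ∈ K := by rw [hKdef, mem_comp]
  have hKU : K ⊆ U := by
    intro v hv
    rw [hKdef, mem_comp] at hv
    induction hv with
    | refl => exact hp
    | tail _ h _ =>
      obtain ⟨e, he, hh | hh⟩ := h
      · rw [← hh.2]; exact (hins e he).2
      · rw [← hh.2]; exact (hins e he).1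
  have hqK : q ∈ K := by
    by_contra hq
    have h0 : ∑ v ∈ K, bd s t g v = 0 := by
      rw [sum_bd_cross]
      refine Finset.sum_eq_zero fun e he => ?_
      rw [mem_cross] at he
      have : g e = 0 := by
        by_contra hne
        exact he (comp_closed s t g p e hne)
      simp [this]
    rw [Finset.sum_congr rfl (fun v _ => hbd v), Finset.sum_sub_distrib] at h0
    simp [hpK, hq] at h0
  have hval : ∀ e, (g e : ZMod 2) = 0 → g e = 0 := by
    intro e he
    have h1 := hg e
    have h2 : (2:ℤ) ∣ g e := by
      have := (ZMod.intCast_zmod_eq_zero_iff_dvd (g e) 2).1 he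
      exact_mod_cast this
    split_ifs at h1 <;> omega
  have hsupp : ∀ e, (if s e ∈ K then (g e : ZMod 2) else 0) ≠ 0 → g e ≠ 0 ∧ s e ∈ K ∧ t e ∈ K := by
    intro e he
    have h1 : s e ∈ K := by by_contra hc; simp [hc] at he
    have h2 : g e ≠ 0 := by
      intro hc; simp [hc] at he
    exact ⟨h2, h1, (comp_closed s t g p e h2).1 h1⟩
  refine ⟨fun e => if s e ∈ K then (g e : ZMod 2) else 0, K, hKU, hpK, hqK, ?_, ?_, ?_⟩
  · intro v
    by_cases hv : v ∈ K
    · have h1 : bd s t (fun e => if s e ∈ K then (g e : ZMod 2) else 0) v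
          = bd s t (fun e => (Int.castAddHom (ZMod 2)) (g e)) v := by
        refine bd_congr s t _ _ v ?_
        rintro e (rfl | rfl)
        · simp [hv]
        · by_cases hz : g e = 0
          · simp [hz]
          · simp
            intro hcon; exact absurd ((comp_closed s t g p e hz).2 hv) hcon
      rw [h1, bd_map, hbd]
      have h2 : (2 : ZMod 2) = 0 := by rfl
      split_ifs <;> simp [h2]
    · have h1 : bd s t (fun e => if s e ∈ K then (g e : ZMod 2) else 0) v
          = bd s t (fun e => 0) v := by
        refine bd_congr s t _ _ v ?_
        rintro e (rfl | rfl)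
        · simp [hv]
        · by_contra hne
          exact hv (hsupp e hne).2.2
      rw [h1]; simp [bd]
  · intro e he; exact (hsupp e he).2
  · intro v hv
    rw [hKdef, mem_comp] at hv
    induction hv with
    | refl => exact Relation.ReflTransGen.refl
    | tail hpre h ih =>
      refine ih.tail ?_
      obtain ⟨e, he, hh⟩ := h
      refine ⟨e, ?_, hh⟩
      have hm := (mem_comp s t g p _).2 hpre
      rw [← hKdef] at hm
      have : s e ∈ K := by
        rcases hh with hh | hh
        · rw [hh.1]; exact hm
        · exact (comp_closed s t g p e he).2 (by rw [hh.1]; exact hm)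
      simp only [this, if_true]
      exact fun hc => he (hval e hc)

/-- Seymour-type statement relative to a set `X`. -/
def PX (X : Finset V) : Prop :=
  ∃ (h : E → ZMod 2) (f : E → ZMod 3), (∀ v, bd s t h v = 0) ∧
    (∀ e, s e ∈ X ∨ t e ∈ X → h e = 0) ∧ (∀ v, v ∉ X → bd s t f v = 0) ∧
    ∀ e, ¬ (s e ∈ X ∧ t e ∈ X) → h e = 0 → f e ≠ 0

theorem PX_step [Fintype V] (X K : Finset V) (hdis : Disjoint X K) (p : V)
    (h1 : E → ZMod 2) (hb1 : ∀ v, bd s t h1 v = 0) (hs1 : ∀ e, h1 e ≠ 0 → s e ∈ K ∧ t e ∈ K)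
    (hconn : ∀ v ∈ K, Relation.ReflTransGen (sAdj s t h1) p v)
    (e1 e2 : E) (hne : e1 ≠ e2)
    (he1 : (s e1 ∈ X ∧ t e1 ∈ K) ∨ (s e1 ∈ K ∧ t e1 ∈ X))
    (he2 : (s e2 ∈ X ∧ t e2 ∈ K) ∨ (s e2 ∈ K ∧ t e2 ∈ X))
    (hP : PX s t (X ∪ K)) : PX s t X := by
  obtain ⟨h', f', hb', hs', hf', hn'⟩ := hP
  have hXK : ∀ v, v ∈ X → v ∉ K := fun v hv hk => (Finset.disjoint_left.1 hdis) hv hk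
  let f0 : E → ZMod 3 := fun e => if s e ∈ X ∪ K ∧ t e ∈ X ∪ K then 1 else f' e
  let ε : E → ZMod 3 := fun e => if s e ∈ K then 1 else -1
  have hε : ∀ e, ε e ≠ 0 := by
    intro e; simp only [ε]
    split_ifs
    · exact one_ne_zero
    · exact neg_ne_zero.2 one_ne_zero
  obtain ⟨c, d, hc, hd, hcd⟩ := z3_choice (∑ v ∈ K, bd s t f0 v) (ε e1) (ε e2) (hε _) (hε _)
  let f1 : E → ZMod 3 := fun e => f0 e + ((if e = e1 then c else 0) + (if e = e2 then d else 0))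
  have hsing : ∀ (e : E) (c : ZMod 3), ((s e ∈ X ∧ t e ∈ K) ∨ (s e ∈ K ∧ t e ∈ X)) →
      ∑ v ∈ K, bd s t (fun e' => if e' = e then c else 0) v = ε e * c := by
    intro e c he
    rw [Finset.sum_congr rfl (fun v _ => bd_single s t e c v), Finset.sum_sub_distrib]
    rcases he with he | he
    · have := hXK _ he.1
      simp [ε, he.2, this]
    · have := hXK _ he.2
      simp [ε, he.1, this]
  have hK0 : ∑ v ∈ K, bd s t f1 v = 0 := by
    simp only [f1, bd_add]
    rw [Finset.sum_add_distrib, Finset.sum_add_distrib, hsing e1 c he1, hsing e2 d he2, ← add_assoc]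
    exact hcd
  obtain ⟨x, hx, hbx⟩ := conn_fix s t h1 K p hconn (fun v => - bd s t f1 v) (by simp [hK0])
  have hins : ∀ e, (s e ∈ X ∧ t e ∈ K) ∨ (s e ∈ K ∧ t e ∈ X) → s e ∈ X ∪ K ∧ t e ∈ X ∪ K := by
    intro e he
    simp only [Finset.mem_union]; tauto
  have hf1 : ∀ e, ¬ (s e ∈ X ∪ K ∧ t e ∈ X ∪ K) → f1 e = f' e := by
    intro e he
    have n1 : e ≠ e1 := by rintro rfl; exact he (hins _ he1)
    have n2 : e ≠ e2 := by rintro rfl; exact he (hins _ he2)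
    simp only [f1, f0, he, n1, n2, if_false]; simp
  have hf1' : ∀ e, (s e ∈ X ∪ K ∧ t e ∈ X ∪ K) → f1 e ≠ 0 := by
    intro e he
    simp only [f1, f0, he, and_self, if_true]
    by_cases n1 : e = e1
    · subst n1; simp only [hne, if_true, if_false, add_zero]; exact z3_c c hc
    · by_cases n2 : e = e2
      · subst n2; simp only [n1, if_true, if_false, zero_add]; exact z3_c d hd
      · simp [n1, n2]
  refine ⟨fun e => h' e + h1 e, fun e => f1 e + x e, ?_, ?_, ?_, ?_⟩
  · intro v; rw [bd_add, hb', hb1, add_zero]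
  · intro e he
    have a1 : h' e = 0 := hs' e (by simp only [Finset.mem_union]; tauto)
    have a2 : h1 e = 0 := by
      by_contra hc
      have := hs1 e hc
      rcases he with he | he
      · exact hXK _ he this.1
      · exact hXK _ he this.2
    simp only [a1, a2, add_zero]
  · intro v hv
    rw [bd_add, hbx]
    by_cases hk : v ∈ K
    · simp [hk]
    · simp only [hk, if_false, add_zero]
      have : v ∉ X ∪ K := by simp [hv, hk]
      rw [← hf' v this]
      refine bd_congr s t _ _ v ?_
      rintro e (rfl | rfl)
      · exact hf1 e (fun h => this h.1)
      · exact hf1 e (fun h => this h.2)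
  · intro e he hz
    simp only at hz ⊢
    by_cases hin : s e ∈ X ∪ K ∧ t e ∈ X ∪ K
    · have a1 : h' e = 0 := hs' e (Or.inl hin.1)
      rw [a1, zero_add] at hz
      rw [hx e hz, add_zero]
      exact hf1' e hin
    · have a2 : h1 e = 0 := by
        by_contra hc
        have := hs1 e hc
        exact hin (by simp [this])
      rw [a2, add_zero] at hz
      rw [hx e a2, add_zero, hf1 e hin]
      exact hn' e hin hz

theorem PX_all [Fintype V] (hcut : ∀ S : Finset V, (cross s t S).card = 0 ∨ 3 ≤ (cross s t S).card) (n : ℕ) :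
    ∀ X : Finset V, (Xᶜ).card = n → PX s t X := by
  induction n using Nat.strong_induction_on with
  | _ n ih =>
  intro X hX
  by_cases hemp : Xᶜ = ∅
  · have : ∀ v, v ∈ X := by
      intro v; by_contra hv
      have : v ∈ Xᶜ := by simpa using hv
      rw [hemp] at this; simp at this
    exact ⟨fun _ => 0, fun _ => 0, by simp [bd], by simp, fun v hv => absurd (this v) hv,
      fun e he => absurd ⟨this _, this _⟩ he⟩
  let nX : Finset V → Finset E := fun U => (cross s t U).filter fun e => s e ∉ X ∧ t e ∉ X
  let F : Finset (Finset V) := (Finset.univ : Finset (Finset V)).filter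
    fun U => U ⊆ Xᶜ ∧ U.Nonempty ∧ (nX U).card ≤ 1
  have hF : F.Nonempty := by
    refine ⟨Xᶜ, ?_⟩
    simp only [F, Finset.mem_filter, Finset.mem_univ, true_and]
    refine ⟨Finset.Subset.refl _, Finset.nonempty_iff_ne_empty.2 hemp, ?_⟩
    have : nX Xᶜ = ∅ := by
      refine Finset.eq_empty_of_forall_notMem fun e he => ?_
      simp only [nX, Finset.mem_filter, mem_cross, Finset.mem_compl] at he
      tauto
    simp [this]
  obtain ⟨U, hUF, hUmin⟩ := Finset.exists_min_image F Finset.card hF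
  simp only [F, Finset.mem_filter, Finset.mem_univ, true_and] at hUF hUmin
  obtain ⟨hUX, hUne, hU1⟩ := hUF
  have hUX' : ∀ v ∈ U, v ∉ X := fun v hv => by simpa using hUX hv
  have hcard : ∀ K : Finset V, Disjoint X K → K.Nonempty → ((X ∪ K)ᶜ).card < n := by
    intro K hd hK
    rw [← hX]
    refine Finset.card_lt_card ?_
    rw [Finset.ssubset_iff_of_subset (by intro v; simp; tauto)]
    obtain ⟨k, hk⟩ := hK
    refine ⟨k, ?_, by simp [hk]⟩
    simpa using fun h => (Finset.disjoint_left.1 hd) h hk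
  rcases hcut U with h0 | h3
  · obtain ⟨u, hu⟩ := hUne
    have hd : Disjoint X {u} := by simpa using hUX' u hu
    obtain ⟨h', f', hb', hs', hf', hn'⟩ := ih _ (hcard {u} hd ⟨u, by simp⟩) (X ∪ {u}) rfl
    have hf'' : ∀ v, v ∉ X → bd s t f' v = 0 := by
      intro v hv
      by_cases hvu : v = u
      · subst hvu
        have hs : ∑ w ∈ U, bd s t f' w = 0 := by
          rw [sum_bd_cross, Finset.card_eq_zero.1 h0]; simp
        rw [Finset.sum_eq_single_of_mem v hu] at hs
        · exact hs
        · intro w hw hwv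
          exact hf' w (by simp [hwv, hUX' w hw])
      · exact hf' v (by simp [hv, hvu])
    -- loops at u
    refine ⟨h', fun e => if s e = u ∧ t e = u then 1 else f' e, hb', ?_, ?_, ?_⟩
    · intro e he; exact hs' e (by simp only [Finset.mem_union]; tauto)
    · intro v hv
      rw [← hf'' v hv]
      unfold bd
      refine Finset.sum_congr rfl fun e _ => ?_
      by_cases hl : s e = u ∧ t e = u
      · simp [hl]
      · simp only [hl, if_false]
    · intro e he hz
      by_cases hl : s e = u ∧ t e = u
      · simp [hl]
      · simp only [hl, if_false]
        refine hn' e ?_ hz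
        simp only [Finset.mem_union, Finset.mem_singleton]
        rintro ⟨a1, a2⟩
        have hc : e ∉ cross s t U := by rw [Finset.card_eq_zero.1 h0]; simp
        rw [mem_cross, not_not] at hc
        have hx := hUX' (s e)
        have hy := hUX' (t e)
        rcases a1 with a1 | a1 <;> rcases a2 with a2 | a2
        · exact he ⟨a1, a2⟩
        · exact hx (hc.2 (by rw [a2]; exact hu)) a1
        · exact hy (hc.1 (by rw [a1]; exact hu)) a2
        · exact hl ⟨a1, a2⟩
  · -- main case
    have h2 : 1 < ((cross s t U).filter fun e => ¬ (s e ∉ X ∧ t e ∉ X)).card := by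
      have := Finset.card_filter_add_card_filter_not (s := cross s t U) (fun e => s e ∉ X ∧ t e ∉ X)
      simp only [nX] at hU1
      omega
    obtain ⟨e1, he1, e2, he2, hne⟩ := Finset.one_lt_card.1 h2
    have hend : ∀ e, e ∈ ((cross s t U).filter fun e => ¬ (s e ∉ X ∧ t e ∉ X)) →
        ∃ p ∈ U, (s e ∈ X ∧ t e = p) ∨ (s e = p ∧ t e ∈ X) := by
      intro e he
      simp only [Finset.mem_filter, mem_cross] at he
      have hx := hUX' (s e)
      have hy := hUX' (t e)
      by_cases hs : s e ∈ U
      · exact ⟨s e, hs, Or.inr ⟨rfl, by tauto⟩⟩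
      · exact ⟨t e, by tauto, Or.inl ⟨by tauto, rfl⟩⟩
    obtain ⟨p, hpU, hp⟩ := hend e1 he1
    obtain ⟨q, hqU, hq⟩ := hend e2 he2
    obtain ⟨h1, K, hKU, hpK, hqK, hb1, hs1, hconn⟩ := even_conn s t U p q hpU (by
      intro S hpS hqS
      have m : ∀ W : Finset V, W ⊆ U → W.Nonempty → W ≠ U → 2 ≤ (nX W).card := by
        intro W hW hWn hWU
        by_contra hcon
        have := hUmin W ⟨hW.trans hUX, hWn, by omega⟩
        exact hWU (Finset.eq_of_subset_of_card_le hW this)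
      have m1 := m (U ∩ S) Finset.inter_subset_left ⟨p, by simp [hpU, hpS]⟩ (by
        intro h
        have : q ∈ U ∩ S := by rw [h]; exact hqU
        exact hqS (Finset.mem_inter.1 this).2)
      have m2 := m (U \ S) Finset.sdiff_subset ⟨q, by simp [hqU, hqS]⟩ (by
        intro h
        have : p ∈ U \ S := by rw [h]; exact hpU
        exact (Finset.mem_sdiff.1 this).2 hpS)
      have hle : (nX (U ∩ S)).card + (nX (U \ S)).card ≤
          2 * ((cross s t S).filter fun e => s e ∈ U ∧ t e ∈ U).card + (nX U).card := by
        simp only [nX, cross, Finset.filter_filter, Finset.card_filter]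
        rw [Finset.mul_sum, ← Finset.sum_add_distrib, ← Finset.sum_add_distrib]
        refine Finset.sum_le_sum fun e _ => ?_
        by_cases a1 : s e ∈ U <;> by_cases a2 : t e ∈ U <;> by_cases a3 : s e ∈ S <;>
          by_cases a4 : t e ∈ S <;> simp [a1, a2, a3, a4, hUX']
      omega)
    have hd : Disjoint X K := by
      rw [Finset.disjoint_left]
      intro v hv hk
      exact hUX' v (hKU hk) hv
    refine PX_step s t X K hd p h1 hb1 hs1 hconn e1 e2 hne ?_ ?_
      (ih _ (hcard K hd ⟨p, hpK⟩) _ rfl)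
    · rcases hp with hp | hp
      · exact Or.inl ⟨hp.1, hp.2 ▸ hpK⟩
      · exact Or.inr ⟨hp.1 ▸ hpK, hp.2⟩
    · rcases hq with hp | hp
      · exact Or.inl ⟨hp.1, hp.2 ▸ hqK⟩
      · exact Or.inr ⟨hp.1 ▸ hqK, hp.2⟩

theorem lift2 [Fintype V] (h : E → ZMod 2) (hb : ∀ v, bd s t h v = 0) :
    ∃ g : E → ℤ, (∀ v, bd s t g v = 0) ∧ (∀ e, h e = 0 → g e = 0) ∧
      (∀ e, h e ≠ 0 → g e = 1 ∨ g e = -1) := by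
  choose F hF0 hF1 hF using fun e => z2_lift' (h e)
  have hdv : ∀ v, ∃ k, bd s t F v = 2 * k := by
    intro v
    have : ((bd s t F v : ℤ) : ZMod 2) = 0 := by
      have h1 := bd_map s t (Int.castAddHom (ZMod 2)) F v
      have h2 : (fun e => (Int.castAddHom (ZMod 2)) (F e)) = h := by funext e; exact hF e
      rw [h2, hb] at h1; exact h1.symm
    have := (ZMod.intCast_zmod_eq_zero_iff_dvd _ 2).1 this
    exact_mod_cast this
  choose b hb2 using hdv
  have hb0 : ∑ v, b v = 0 := by
    have := sum_bd_univ s t F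
    rw [Finset.sum_congr rfl (fun v _ => hb2 v), ← Finset.mul_sum] at this
    omega
  obtain ⟨y, hy, hby⟩ := hoffman s t b hb0 (fun _ => 0) F hF0 (by
    intro S
    have h1 := sum_bd s t F S
    rw [Finset.sum_congr rfl (fun v _ => hb2 v), ← Finset.mul_sum] at h1
    have h2 : ∑ e, ((if s e ∈ S then F e else 0) - (if t e ∈ S then F e else 0)) ≤
        ∑ e, 2 * (if s e ∈ S ∧ t e ∉ S then F e else if s e ∉ S ∧ t e ∈ S then -0 else 0) := by
      refine Finset.sum_le_sum fun e _ => ?_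
      have := hF0 e
      by_cases h1 : s e ∈ S <;> by_cases h2 : t e ∈ S <;> simp [h1, h2] <;> omega
    rw [← Finset.mul_sum] at h2
    linarith)
  refine ⟨fun e => F e + (-2) * y e, ?_, ?_, ?_⟩
  · intro v
    rw [bd_add, bd_mul, hby, hb2]; ring
  · intro e he
    have h1 := hF e; have h2 := hy e; have h3 := hF0 e; have h4 := hF1 e
    have : F e = 0 ∨ F e = 1 := by omega
    rcases this with h | h
    · rw [h] at h2; beta_reduce; rw [h]; omega
    · rw [h, he] at h1; simp at h1
  · intro e he
    have h1 := hF e; have h2 := hy e; have h3 := hF0 e; have h4 := hF1 e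
    have : F e = 0 ∨ F e = 1 := by omega
    rcases this with h | h
    · rw [h] at h1; simp at h1; exact absurd h1.symm he
    · rw [h] at h2; beta_reduce; rw [h]; omega

theorem lift3 [Fintype V] (f : E → ZMod 3) (hb : ∀ v, bd s t f v = 0) (e0 : E) (he0 : f e0 = 1) :
    ∃ g : E → ℤ, (∀ v, bd s t g v = 0) ∧ g e0 = 1 ∧ (∀ e, -2 ≤ g e ∧ g e ≤ 2) ∧
      (∀ e, f e ≠ 0 → g e ≠ 0) := by
  choose F hF0 hF1 hF using fun e => z3_lift' (f e)
  have hFe0 : F e0 = 1 := by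
    have h1 := hF e0; have h3 := hF0 e0; have h4 := hF1 e0
    have : F e0 = 0 ∨ F e0 = 1 ∨ F e0 = -1 := by omega
    rcases this with h | h | h
    · rw [h, he0] at h1; exact absurd h1 (by simp)
    · exact h
    · rw [h, he0] at h1
      exfalso
      have : ((2 : ℤ) : ZMod 3) = 0 := by
        have : ((2:ℤ) : ZMod 3) = 1 - ((-1 : ℤ) : ZMod 3) := by push_cast; ring
        rw [this, h1]; simp
      have := (ZMod.intCast_zmod_eq_zero_iff_dvd _ 3).1 this
      norm_num at this
  have hdv : ∀ v, ∃ k, bd s t F v = 3 * k := by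
    intro v
    have : ((bd s t F v : ℤ) : ZMod 3) = 0 := by
      have h1 := bd_map s t (Int.castAddHom (ZMod 3)) F v
      have h2 : (fun e => (Int.castAddHom (ZMod 3)) (F e)) = f := by funext e; exact hF e
      rw [h2, hb] at h1; exact h1.symm
    have := (ZMod.intCast_zmod_eq_zero_iff_dvd _ 3).1 this
    exact_mod_cast this
  choose b hb2 using hdv
  have hb0 : ∑ v, b v = 0 := by
    have := sum_bd_univ s t F
    rw [Finset.sum_congr rfl (fun v _ => hb2 v), ← Finset.mul_sum] at this
    omega
  obtain ⟨y, hy, hby⟩ := hoffman s t b hb0 (fun e => min (F e) 0)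
    (fun e => if e = e0 then 0 else max (F e) 0) (fun e => by split_ifs <;> omega) (by
    intro S
    have h1 := sum_bd s t F S
    rw [Finset.sum_congr rfl (fun v _ => hb2 v), ← Finset.mul_sum] at h1
    have h2 : ∑ e, ((if s e ∈ S then F e else 0) - (if t e ∈ S then F e else 0)) ≤
        ∑ e, (3 * (if s e ∈ S ∧ t e ∉ S then (if e = e0 then 0 else max (F e) 0) else
          if s e ∉ S ∧ t e ∈ S then -(min (F e) 0) else 0) + if e = e0 then 1 else 0) := by
      refine Finset.sum_le_sum fun e _ => ?_
      have a0 := hF0 e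
      have a1 := hF1 e
      by_cases he : e = e0
      · subst he
        by_cases h1 : s e ∈ S <;> by_cases h2 : t e ∈ S <;> simp [h1, h2, hFe0]
      · by_cases h1 : s e ∈ S <;> by_cases h2 : t e ∈ S <;> simp [h1, h2, he] <;> omega
    rw [Finset.sum_add_distrib, ← Finset.mul_sum] at h2
    simp only [Finset.sum_ite_eq', Finset.mem_univ, if_true] at h2
    omega)
  refine ⟨fun e => F e + (-3) * y e, ?_, ?_, ?_, ?_⟩
  · intro v
    rw [bd_add, bd_mul, hby, hb2]; ring
  · have := hy e0
    simp [hFe0] at this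
    have : y e0 = 0 := by omega
    simp [this, hFe0]
  · intro e
    have h2 := hy e; have h3 := hF0 e; have h4 := hF1 e
    beta_reduce at h2 ⊢
    split_ifs at h2 <;> omega
  · intro e he
    have h1 := hF e; have h3 := hF0 e; have h4 := hF1 e
    have : F e ≠ 0 := by
      intro h; rw [h] at h1; simp at h1; exact he h1.symm
    beta_reduce
    omega

theorem seymour3 [Fintype V] (hcut : ∀ S : Finset V, (cross s t S).card = 0 ∨ 3 ≤ (cross s t S).card) (e0 : E) :
    ∃ ψ : E → ℤ, (∀ v, bd s t ψ v = 0) ∧ ψ e0 = 1 ∧ (∀ e, |ψ e| ≤ 5) ∧ ∀ e, ψ e ≠ 0 := by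
  obtain ⟨h, f', hb, hs, hf', hn'⟩ := PX_all s t hcut _ {s e0} rfl
  have hf : ∃ f : E → ZMod 3, (∀ v, bd s t f v = 0) ∧ (∀ e, h e = 0 → f e ≠ 0) := by
    have hz : ∀ v, bd s t f' v = 0 := by
      intro v
      by_cases hv : v = s e0
      · have := sum_bd_univ s t f'
        rw [Finset.sum_eq_single v] at this
        · exact this
        · intro w _ hw; exact hf' w (by simp; rintro rfl; exact hw hv.symm)
        · simp
      · exact hf' v (by simpa using hv)
    refine ⟨fun e => if s e = t e then 1 else f' e, ?_, ?_⟩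
    · intro v
      rw [← hz v]
      unfold bd
      refine Finset.sum_congr rfl fun e _ => ?_
      by_cases hl : s e = t e
      · simp [hl]
      · simp only [hl, if_false]
    · intro e he
      by_cases hl : s e = t e
      · simp [hl]
      · simp only [hl, if_false]
        refine hn' e ?_ he
        simp only [Finset.mem_singleton]
        rintro ⟨h1, h2⟩
        exact hl (h1.trans h2.symm)
  obtain ⟨f, hfb, hfn⟩ := hf
  have hh0 : h e0 = 0 := hs e0 (by simp)
  have hf1 : ∃ f : E → ZMod 3, (∀ v, bd s t f v = 0) ∧ (∀ e, h e = 0 → f e ≠ 0) ∧ f e0 = 1 := by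
    rcases z3_neg _ (hfn e0 hh0) with h1 | h1
    · exact ⟨f, hfb, hfn, h1⟩
    · exact ⟨fun e => - f e, fun v => by rw [bd_neg, hfb, neg_zero],
        fun e he => neg_ne_zero.2 (hfn e he), h1⟩
  obtain ⟨f, hfb, hfn, hfe⟩ := hf1
  obtain ⟨g2, hg2b, hg20, hg21⟩ := lift2 s t h hb
  obtain ⟨g3, hg3b, hg3e, hg3, hg3n⟩ := lift3 s t f hfb e0 hfe
  refine ⟨fun e => 3 * g2 e + g3 e, ?_, ?_, ?_, ?_⟩
  · intro v; rw [bd_add, bd_mul, hg2b, hg3b]; rfl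
  · simp [hg20 e0 hh0, hg3e]
  · intro e
    have h3 := hg3 e
    beta_reduce
    rw [abs_le]
    by_cases he : h e = 0
    · rw [hg20 e he]; omega
    · have := hg21 e he; omega
  · intro e
    have h3 := hg3 e
    beta_reduce
    by_cases he : h e = 0
    · rw [hg20 e he]; have := hg3n e (hfn e he); omega
    · have := hg21 e he; omega

theorem seymour [Fintype V] (n : ℕ) : ∀ (s t : E → V) (e0 : E),
    (Finset.univ.filter fun e => s e ≠ t e).card = n → (∀ S : Finset V, cross s t S ≠ {e0}) →
    ∃ ψ : E → ℤ, (∀ v, bd s t ψ v = 0) ∧ ψ e0 = 1 ∧ (∀ e, |ψ e| ≤ 5) ∧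
      ∀ e, ψ e = 0 → ∃ S : Finset V, cross s t S = {e} := by
  induction n using Nat.strong_induction_on with
  | _ n ih =>
  intro s t e0 hn hnb
  -- contraction
  have contr : ∀ a : E, a ≠ e0 → s a ≠ t a → ∃ ψ : E → ℤ, (∀ v, bd s t ψ v = 0) ∧ ψ e0 = 1 ∧
      (∀ e, e ≠ a → |ψ e| ≤ 5) ∧ ∀ e, e ≠ a → ψ e = 0 → ∃ S : Finset V, cross s t S = {e} := by
    intro a hae ha
    let r : V → V := fun v => if v = t a then s a else v
    have hcr : ∀ S : Finset V, cross (fun e => r (s e)) (fun e => r (t e)) S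
        = cross s t (Finset.univ.filter fun v => r v ∈ S) := by
      intro S; ext e; simp [mem_cross]
    obtain ⟨ψ', hb', he', h5, hz⟩ := ih _ (by
        rw [← hn]
        refine Finset.card_lt_card (s := Finset.univ.filter fun e => r (s e) ≠ r (t e)) ?_
        rw [Finset.ssubset_iff_of_subset]
        · refine ⟨a, by simp [ha], ?_⟩
          simp [r]
        · intro e
          simp only [Finset.mem_filter, Finset.mem_univ, true_and]
          intro h h'
          exact h (by rw [h']))
      (fun e => r (s e)) (fun e => r (t e)) e0 rfl
      (by intro S; rw [hcr]; exact hnb _)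
    have hfib : ∀ w, bd (fun e => r (s e)) (fun e => r (t e)) ψ' w =
        ∑ v ∈ Finset.univ.filter (fun v => r v = w), bd s t ψ' v := by
      intro w
      rw [sum_bd]
      unfold bd
      simp
    have hb1 : ∀ v, v ≠ s a → v ≠ t a → bd s t ψ' v = 0 := by
      intro v h1 h2
      have := hfib v
      rw [hb', Finset.sum_eq_single v] at this
      · exact this.symm
      · intro w hw hwv
        exfalso
        simp only [Finset.mem_filter, Finset.mem_univ, true_and, r] at hw
        split_ifs at hw
        · exact h1 hw.symm
        · exact hwv hw
      · intro h; exfalso; apply h; simp [r, h2]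
    have hb2 : bd s t ψ' (s a) + bd s t ψ' (t a) = 0 := by
      have := sum_bd_univ s t ψ'
      rw [← Finset.sum_subset (Finset.subset_univ {s a, t a})] at this
      · rwa [Finset.sum_pair ha] at this
      · intro v _ hv
        simp at hv
        exact hb1 v hv.1 hv.2
    refine ⟨fun e => ψ' e + if e = a then bd s t ψ' (t a) else 0, ?_, ?_, ?_, ?_⟩
    · intro v
      rw [bd_add, bd_single]
      by_cases h1 : v = s a
      · subst h1; simp [ha, hb2]
      · by_cases h2 : v = t a
        · subst h2; simp [ha.symm]
        · simp [h1, h2, hb1 v h1 h2]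
    · simp [hae.symm, he']
    · intro e hea; simpa [hea] using h5 e
    · intro e hea h0
      simp [hea] at h0
      obtain ⟨S, hS⟩ := hz e h0
      exact ⟨_, (hcr S).symm.trans hS⟩
  by_cases hbr : ∃ (a : E) (S : Finset V), cross s t S = {a}
  · obtain ⟨a, S, hS⟩ := hbr
    have hae : a ≠ e0 := by rintro rfl; exact hnb S hS
    have ha : s a ≠ t a := by
      intro h
      have : a ∈ cross s t S := by rw [hS]; simp
      rw [mem_cross, h] at this; exact this Iff.rfl
    obtain ⟨ψ, hb, h0, h5, hz⟩ := contr a hae ha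
    have hψa : ψ a = 0 := by
      have := sum_bd_cross s t ψ S
      rw [hS, Finset.sum_eq_zero (fun v _ => hb v)] at this
      simp at this
      split_ifs at this <;> omega
    refine ⟨ψ, hb, h0, fun e => ?_, fun e he => ?_⟩
    · by_cases hea : e = a
      · subst hea; simp [hψa]
      · exact h5 e hea
    · by_cases hea : e = a
      · subst hea; exact ⟨S, hS⟩
      · exact hz e hea he
  by_cases h2 : ∃ S : Finset V, (cross s t S).card = 2
  · obtain ⟨S, hS⟩ := h2
    have : ∃ a b : E, a ≠ b ∧ a ≠ e0 ∧ cross s t S = {a, b} := by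
      obtain ⟨a, b, hab, hS⟩ := Finset.card_eq_two.1 hS
      by_cases hae : a = e0
      · exact ⟨b, a, hab.symm, by rw [← hae]; exact hab.symm, by rw [hS, Finset.pair_comm]⟩
      · exact ⟨a, b, hab, hae, hS⟩
    obtain ⟨a, b, hab, hae, hS⟩ := this
    have ha : s a ≠ t a := by
      intro h
      have : a ∈ cross s t S := by rw [hS]; simp
      rw [mem_cross, h] at this; exact this Iff.rfl
    obtain ⟨ψ, hb, h0, h5, hz⟩ := contr a hae ha
    have hψb : ψ b ≠ 0 := fun h => hbr ⟨b, hz b hab.symm h⟩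
    have hψa : ψ a = ψ b ∨ ψ a = - ψ b := by
      have := sum_bd_cross s t ψ S
      rw [hS, Finset.sum_eq_zero (fun v _ => hb v), Finset.sum_pair hab] at this
      split_ifs at this <;> omega
    refine ⟨ψ, hb, h0, fun e => ?_, fun e he => ?_⟩
    · by_cases hea : e = a
      · subst hea
        have := h5 b hab.symm
        rcases hψa with h | h
        · rwa [h]
        · rwa [h, abs_neg]
      · exact h5 e hea
    · by_cases hea : e = a
      · subst hea; exfalso; omega
      · exact hz e hea he
  obtain ⟨ψ, hb, h0, h5, hz⟩ := seymour3 s t (by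
    intro S
    by_contra hcon
    push Not at hcon
    have : (cross s t S).card = 1 ∨ (cross s t S).card = 2 := by omega
    rcases this with h | h
    · obtain ⟨a, ha⟩ := Finset.card_eq_one.1 h
      exact hbr ⟨a, S, ha⟩
    · exact h2 ⟨S, h⟩) e0
  exact ⟨ψ, hb, h0, h5, fun e he => absurd he (hz e)⟩


theorem cross_inter (S T : Finset V) (hS : cross s t S = ∅) (hT : cross s t T = ∅) :
    cross s t (S ∩ T) = ∅ := by
  refine Finset.eq_empty_of_forall_notMem fun e he => ?_
  have h1 : e ∉ cross s t S := by rw [hS]; simp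
  have h2 : e ∉ cross s t T := by rw [hT]; simp
  rw [mem_cross] at he h1 h2
  simp only [Finset.mem_inter] at he
  tauto

/-- the boundary with two sources and two sinks -/
noncomputable def bet (x1 y1 x2 y2 v : V) : ℤ :=
  (if v = x1 then 1 else 0) + (if v = y1 then 1 else 0) - (if v = x2 then 1 else 0) - (if v = y2 then 1 else 0)

theorem sum_bet (x1 y1 x2 y2 : V) (S : Finset V) : ∑ v ∈ S, bet x1 y1 x2 y2 v =
    (if x1 ∈ S then 1 else 0) + (if y1 ∈ S then 1 else 0) - (if x2 ∈ S then 1 else 0)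
      - (if y2 ∈ S then 1 else 0) := by
  unfold bet
  rw [Finset.sum_sub_distrib, Finset.sum_sub_distrib, Finset.sum_add_distrib]
  simp

theorem pairing (x1 y1 x2 y2 : V) (c : ℤ) (hc : c ≠ 0) (ψ : E → ℤ)
    (hb : ∀ v, bd s t ψ v = c * bet x1 y1 x2 y2 v) :
    (∀ S : Finset V, cross s t S = ∅ → (x1 ∈ S ↔ x2 ∈ S)) ∨
    (∀ S : Finset V, cross s t S = ∅ → (x1 ∈ S ↔ y2 ∈ S)) := by
  by_contra hcon
  push Not at hcon
  obtain ⟨⟨S, hS, h1⟩, T, hT, h2⟩ := hcon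
  have key : ∀ S : Finset V, cross s t S = ∅ → ∑ v ∈ S, bet x1 y1 x2 y2 v = 0 := by
    intro S hS
    have := sum_bd_cross s t ψ S
    rw [hS, Finset.sum_congr rfl (fun v _ => hb v), ← Finset.mul_sum] at this
    simpa [hc] using this
  have k1 := key S hS
  have k2 := key T hT
  have k3 := key _ (cross_inter s t S T hS hT)
  rw [sum_bet] at k1 k2 k3
  simp only [Finset.mem_inter] at k3
  by_cases a1 : x1 ∈ S <;> by_cases a2 : y1 ∈ S <;> by_cases a3 : x2 ∈ S <;> by_cases a4 : y2 ∈ S <;>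
    simp [a1, a2, a3, a4] at k1 k3 h1 <;>
  by_cases b1 : x1 ∈ T <;> by_cases b2 : y1 ∈ T <;> by_cases b3 : x2 ∈ T <;> by_cases b4 : y2 ∈ T <;>
    simp [b1, b2, b3, b4] at k2 k3 h2

/-- residual step -/
def Rst (ψ : E → ℤ) (u v : V) : Prop :=
  ∃ e, (s e = u ∧ t e = v ∧ 0 ≤ ψ e) ∨ (s e = v ∧ t e = u ∧ ψ e ≤ 0)

theorem core [Fintype V] (x1 y1 x2 y2 : V) (c : ℤ) (hc : c ≠ 0) (ψ0 : E → ℤ) (hnz : ∀ e, ψ0 e ≠ 0)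
    (hb : ∀ v, bd s t ψ0 v = c * bet x1 y1 x2 y2 v)
    (hx : ∀ S : Finset V, cross s t S = ∅ → (x1 ∈ S ↔ x2 ∈ S)) :
    ∃ ψ : E → ℤ, (∀ v, bd s t ψ v = (if v = x1 then 1 else 0) - (if v = x2 then 1 else 0)) ∧
      (∀ e, |ψ e| ≤ 5) ∧ (∀ a, ψ a = 0 → ∃ S : Finset V, cross s t S = {a}) ∧
      Relation.ReflTransGen (Rst s t ψ) y1 y2 := by
  let s' : Option E → V := fun o => o.elim x2 s
  let t' : Option E → V := fun o => o.elim x1 t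
  have hcr : ∀ (S : Finset V) (e : E), some e ∈ cross s' t' S ↔ e ∈ cross s t S := by
    intro S e; rw [mem_cross, mem_cross]; rfl
  obtain ⟨Ψ, hΨb, hΨ0, hΨ5, hΨz⟩ := seymour _ s' t' none rfl (by
    intro S hS
    have h1 : cross s t S = ∅ := by
      refine Finset.eq_empty_of_forall_notMem fun e he => ?_
      rw [← hcr, hS] at he; simp at he
    have h2 : none ∈ cross s' t' S := by rw [hS]; simp
    rw [mem_cross] at h2
    exact h2 (hx S h1).symm)
  let ψ : E → ℤ := fun e => Ψ (some e)
  have hψb : ∀ v, bd s t ψ v = (if v = x1 then 1 else 0) - (if v = x2 then 1 else 0) := by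
    intro v
    have h1 := hΨb v
    unfold bd at h1
    rw [Fintype.sum_option] at h1
    have h2 : bd s t ψ v = ∑ e : E, ((if s' (some e) = v then Ψ (some e) else 0) - (if t' (some e) = v then Ψ (some e) else 0)) := rfl
    rw [← h2] at h1
    simp only [s', t', Option.elim, hΨ0, eq_comm (b := v)] at h1
    linarith
  refine ⟨ψ, hψb, fun e => hΨ5 _, ?_, ?_⟩
  · intro a ha
    obtain ⟨S, hS⟩ := hΨz (some a) ha
    refine ⟨S, ?_⟩
    ext e
    rw [← hcr, hS]; simp
  · by_contra hcon
    let S : Finset V := Finset.univ.filter fun v => Relation.ReflTransGen (Rst s t ψ) y1 v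
    have hmS : ∀ v, v ∈ S ↔ Relation.ReflTransGen (Rst s t ψ) y1 v := by intro v; simp [S]
    have hy1 : y1 ∈ S := by rw [hmS]
    have hy2 : y2 ∉ S := by rw [hmS]; exact hcon
    have hle : ∀ e ∈ cross s t S, (if s e ∈ S then ψ e else - ψ e) ≤ -1 := by
      intro e he
      rw [mem_cross] at he
      by_cases h1 : s e ∈ S
      · have h2 : t e ∉ S := by tauto
        simp only [h1, if_true]
        by_contra hc
        refine h2 ((hmS _).2 (((hmS _).1 h1).tail ⟨e, Or.inl ⟨rfl, rfl, by omega⟩⟩))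
      · have h2 : t e ∈ S := by tauto
        simp only [h1, if_false]
        by_contra hc
        refine h1 ((hmS _).2 (((hmS _).1 h2).tail ⟨e, Or.inr ⟨rfl, rfl, by omega⟩⟩))
    have h1 := sum_bd_cross s t ψ S
    have h2 := Finset.sum_le_sum hle
    rw [← h1, Finset.sum_congr rfl (fun v _ => hψb v), Finset.sum_sub_distrib] at h2
    simp only [Finset.sum_ite_eq', Finset.sum_const, smul_neg, nsmul_eq_mul, mul_one] at h2
    have h3 := sum_bd_cross s t ψ0 S
    rw [Finset.sum_congr rfl (fun v _ => hb v), ← Finset.mul_sum, sum_bet] at h3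
    simp only [hy1, hy2, if_true, if_false] at h3
    have hcard : (cross s t S).card = 0 ∨ (cross s t S).card = 1 := by
      split_ifs at h2 <;> omega
    rcases hcard with h | h
    · have h0 := Finset.card_eq_zero.1 h
      rw [h0] at h3
      have := hx S h0
      by_cases a1 : x1 ∈ S
      · simp [a1, this.1 a1, hc] at h3
      · have a2 : x2 ∉ S := fun h => a1 (this.2 h)
        simp [a1, a2, hc] at h3
    · rw [h] at h2
      obtain ⟨a, ha⟩ := Finset.card_eq_one.1 h
      have a1 : x1 ∉ S := by
        intro h; simp only [h, if_true] at h2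
        split_ifs at h2 <;> norm_num at h2
      have a2 : x2 ∈ S := by
        by_contra h; simp [a1, h] at h2
      rw [ha] at h3
      simp only [a1, a2, if_true, if_false, Finset.sum_singleton] at h3
      have := hnz a
      split_ifs at h3 <;> omega
end multi

section graph

/-- positive edges -/
abbrev E0 (G : SimpleGraph V) (n₁ n₂ : Sym2 V) : Type := {e : Sym2 V // e ∈ G.edgeSet ∧ e ≠ n₁ ∧ e ≠ n₂}

noncomputable def src {G : SimpleGraph V} {n₁ n₂ : Sym2 V} (e : E0 G n₁ n₂) : V := (Quot.out e.1).1
noncomputable def dst {G : SimpleGraph V} {n₁ n₂ : Sym2 V} (e : E0 G n₁ n₂) : V := (Quot.out e.1).2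

theorem src_dst {G : SimpleGraph V} {n₁ n₂ : Sym2 V} (e : E0 G n₁ n₂) : s(src e, dst e) = e.1 :=
  Quot.out_eq e.1

theorem adj_src_dst {G : SimpleGraph V} {n₁ n₂ : Sym2 V} (e : E0 G n₁ n₂) : G.Adj (src e) (dst e) := by
  have := e.2.1
  rw [← src_dst e] at this
  exact this

theorem kirch [Fintype V] (G : SimpleGraph V) (x1 y1 x2 y2 : V) (hne : s(x1, y1) ≠ s(x2, y2))
    (ha1 : G.Adj x1 y1) (ha2 : G.Adj x2 y2) (τ : V → Sym2 V → ℤ) (φ : Sym2 V → ℤ)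
    (hpos : ∀ e : E0 G s(x1, y1) s(x2, y2), τ (dst e) e.1 = - τ (src e) e.1)
    (h1 : τ y1 s(x1, y1) = τ x1 s(x1, y1)) (h2 : τ y2 s(x2, y2) = τ x2 s(x2, y2)) (v : V) :
    (∑ w : V, if G.Adj v w then τ v s(v, w) * φ s(v, w) else 0) =
      - bd src dst (fun e : E0 G s(x1, y1) s(x2, y2) => - (τ (src e) e.1 * φ e.1)) v
      + τ x1 s(x1, y1) * φ s(x1, y1) * ((if v = x1 then 1 else 0) + (if v = y1 then 1 else 0))
      + τ x2 s(x2, y2) * φ s(x2, y2) * ((if v = x2 then 1 else 0) + (if v = y2 then 1 else 0)) := by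
  let g : Sym2 V → ℤ := fun e => if e ∈ G.edgeSet ∧ v ∈ e then τ v e * φ e else 0
  have hA : (∑ w : V, if G.Adj v w then τ v s(v, w) * φ s(v, w) else 0) = ∑ e, g e := by
    refine Finset.sum_of_injOn (fun w => s(v, w)) ?_ ?_ ?_ ?_
    · intro a _ b _ hab
      exact Sym2.congr_right.1 hab
    · intro a _; simp
    · intro e _ he
      simp only [g]
      rw [if_neg]
      rintro ⟨-, hv⟩
      obtain ⟨w, rfl⟩ := hv
      exact he ⟨w, by simp, rfl⟩
    · intro w _
      simp only [g]
      simp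
  have hB : ∑ e, g e = g s(x1, y1) + g s(x2, y2) + ∑ e : E0 G s(x1, y1) s(x2, y2), g e.1 := by
    have h3 : ∑ e : E0 G s(x1, y1) s(x2, y2), g e.1 =
        ∑ e, if e ∈ G.edgeSet ∧ e ≠ s(x1, y1) ∧ e ≠ s(x2, y2) then g e else 0 := by
      refine Eq.trans ?_ (Finset.sum_filter (fun e => e ∈ G.edgeSet ∧ e ≠ s(x1, y1) ∧ e ≠ s(x2, y2)) g)
      exact (Finset.sum_subtype (p := fun e => e ∈ G.edgeSet ∧ e ≠ s(x1, y1) ∧ e ≠ s(x2, y2))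
        (Finset.univ.filter fun e => e ∈ G.edgeSet ∧ e ≠ s(x1, y1) ∧ e ≠ s(x2, y2))
        (fun e => by simp) g).symm
    have h4 : g s(x1, y1) = ∑ e, if e = s(x1, y1) then g e else 0 := by simp
    have h5 : g s(x2, y2) = ∑ e, if e = s(x2, y2) then g e else 0 := by simp
    rw [h3, h4, h5, ← Finset.sum_add_distrib, ← Finset.sum_add_distrib]
    refine Finset.sum_congr rfl fun e _ => ?_
    by_cases a1 : e = s(x1, y1)
    · subst a1; simp [hne]
    · by_cases a2 : e = s(x2, y2)
      · subst a2; simp [a1]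
      · by_cases a3 : e ∈ G.edgeSet
        · simp [a1, a2, a3]
        · simp [a1, a2, a3, g]
  have hC : ∑ e : E0 G s(x1, y1) s(x2, y2), g e.1 =
      - bd src dst (fun e : E0 G s(x1, y1) s(x2, y2) => - (τ (src e) e.1 * φ e.1)) v := by
    unfold bd
    rw [← Finset.sum_neg_distrib]
    refine Finset.sum_congr rfl fun e _ => ?_
    have hm : v ∈ e.1 ↔ v = src e ∨ v = dst e := by
      conv_lhs => rw [← src_dst e]
      exact Sym2.mem_iff
    have hnd := (adj_src_dst e).ne
    simp only [g, e.2.1, true_and, hm]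
    by_cases b1 : v = src e
    · subst b1; simp [hnd.symm]
    · by_cases b2 : v = dst e
      · subst b2; simp [hnd, hpos]
      · simp [b1, b2, Ne.symm b1, Ne.symm b2]
  have hD : ∀ x y, G.Adj x y → τ y s(x, y) = τ x s(x, y) → g s(x, y) =
      τ x s(x, y) * φ s(x, y) * ((if v = x then 1 else 0) + (if v = y then 1 else 0)) := by
    intro x y hxy ht
    have hmem : s(x, y) ∈ G.edgeSet := hxy
    simp only [g, hmem, true_and, Sym2.mem_iff]
    have := hxy.ne
    by_cases b1 : v = x
    · subst b1; simp [this]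
    · by_cases b2 : v = y
      · subst b2; simp [b1, ht]
      · simp [b1, b2]
  rw [hA, hB, hC, hD x1 y1 ha1 h1, hD x2 y2 ha2 h2]; ring

theorem path_flow [Fintype V] (G : SimpleGraph V) (n₁ n₂ : Sym2 V) (ψ : E0 G n₁ n₂ → ℤ) {u v : V}
    (p : G.Walk u v) : p.IsPath → (∀ d ∈ p.darts, Rst src dst ψ d.fst d.snd) →
    ∃ x : E0 G n₁ n₂ → ℤ, (∀ w, bd src dst x w = (if w = u then 1 else 0) - (if w = v then 1 else 0)) ∧
      (∀ e, x e ≠ 0 → e.1 ∈ p.edges) ∧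
      ∀ e, x e = 0 ∨ (x e = 1 ∧ 0 ≤ ψ e) ∨ (x e = -1 ∧ ψ e ≤ 0) := by
  induction p with
  | nil => intro _ _; exact ⟨fun _ => 0, by simp [bd], by simp, by simp⟩
  | cons h p ih =>
    rename_i u v w
    intro hp hd
    obtain ⟨x, hxb, hxe, hxs⟩ := ih ((SimpleGraph.Walk.cons_isPath_iff h p).1 hp).1
      (fun d hdm => hd d (by simp [hdm]))
    have hnot : s(u, v) ∉ p.edges := by
      have := hp.isTrail
      exact ((SimpleGraph.Walk.isTrail_cons h p).1 this).2
    have hR : Rst src dst ψ u v := hd ⟨(u, v), h⟩ (by simp)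
    obtain ⟨e, he⟩ := hR
    have hes : e.1 = s(u, v) := by
      rw [← src_dst e]
      rcases he with he | he
      · rw [he.1, he.2.1]
      · rw [he.1, he.2.1, Sym2.eq_swap]
    have hx0 : x e = 0 := by
      by_contra hne
      exact hnot (hes ▸ hxe e hne)
    rcases he with he | he
    · refine ⟨fun e' => x e' + if e' = e then 1 else 0, ?_, ?_, ?_⟩
      · intro z
        have hbs : bd src dst (fun e' => if e' = e then (1:ℤ) else 0) z =
            (if z = src e then 1 else 0) - (if z = dst e then 1 else 0) := by
          convert bd_single src dst e (1:ℤ) z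
        rw [bd_add, hbs, hxb, he.1, he.2.1]; ring
      · intro e' h'
        by_cases hee : e' = e
        · subst hee; simp [hes]
        · simp [hee] at h'; simp [hxe e' h']
      · intro e'
        by_cases hee : e' = e
        · subst hee; simp [hx0, he.2.2]
        · simpa [hee] using hxs e'
    · refine ⟨fun e' => x e' + if e' = e then -1 else 0, ?_, ?_, ?_⟩
      · intro z
        have hbs : bd src dst (fun e' => if e' = e then (-1:ℤ) else 0) z =
            (if z = src e then -1 else 0) - (if z = dst e then -1 else 0) := by
          convert bd_single src dst e (-1:ℤ) z
        rw [bd_add, hbs, hxb, he.1, he.2.1]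
        split_ifs <;> norm_num
      · intro e' h'
        by_cases hee : e' = e
        · subst hee; simp [hes]
        · simp [hee] at h'; simp [hxe e' h']
      · intro e'
        by_cases hee : e' = e
        · subst hee; simp [hx0, he.2.2]
        · simpa [hee] using hxs e'

theorem exists_path (G : SimpleGraph V) (R : V → V → Prop) (hR : ∀ u v, R u v → G.Adj u v) {u v : V}
    (h : Relation.ReflTransGen R u v) : ∃ p : G.Walk u v, p.IsPath ∧ ∀ d ∈ p.darts, R d.fst d.snd := by
  have : ∃ p : G.Walk u v, ∀ d ∈ p.darts, R d.fst d.snd := by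
    induction h with
    | refl => exact ⟨SimpleGraph.Walk.nil, by simp⟩
    | tail _ hst ih =>
      obtain ⟨p, hp⟩ := ih
      refine ⟨p.concat (hR _ _ hst), ?_⟩
      intro d hd
      rw [SimpleGraph.Walk.darts_concat] at hd
      simp at hd
      rcases hd with hd | hd
      · exact hp d hd
      · subst hd; exact hst
  obtain ⟨p, hp⟩ := this
  exact ⟨p.bypass, p.bypass_isPath, fun d hd => hp d (p.darts_bypass_subset_darts hd)⟩

theorem main_aux [Fintype V] (G : SimpleGraph V) (σ : Sym2 V → ℤ)
    (hσ : IsSignature G σ) (x1 y1 x2 y2 : V) (hne : s(x1, y1) ≠ s(x2, y2))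
    (hN : NegEdges G σ = {s(x1, y1), s(x2, y2)})
    (c : ℤ) (hc : c ≠ 0) (ψ0 : E0 G s(x1, y1) s(x2, y2) → ℤ) (hnz : ∀ e, ψ0 e ≠ 0)
    (hb : ∀ v, bd src dst ψ0 v = c * bet x1 y1 x2 y2 v)
    (hx : ∀ S : Finset V, cross (E := E0 G s(x1, y1) s(x2, y2)) src dst S = ∅ → (x1 ∈ S ↔ x2 ∈ S)) :
    ∃ τ φ, IsNZFlow G σ 7 τ φ ∧ φ s(x1, y1) = 1 ∧ φ s(x2, y2) = 1 ∧
      ∃ (a b : V) (p : G.Walk a b), p.IsPath ∧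
        ∀ e ∈ G.edgeSet, |φ e| = 6 → e ∈ p.edges := by
  have hn1 : s(x1, y1) ∈ NegEdges G σ := by rw [hN]; simp
  have hn2 : s(x2, y2) ∈ NegEdges G σ := by rw [hN]; simp
  have hposσ : ∀ e : E0 G s(x1, y1) s(x2, y2), σ e.1 = 1 := by
    intro e
    rcases hσ e.1 e.2.1 with h | h
    · exact h
    · exfalso
      have : e.1 ∈ NegEdges G σ := ⟨e.2.1, h⟩
      rw [hN] at this
      rcases this with h | h
      · exact e.2.2.1 h
      · exact e.2.2.2 h
  obtain ⟨ψ, hψb, hψ5, hψz, hreach⟩ := core src dst x1 y1 x2 y2 c hc ψ0 hnz hb hx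
  obtain ⟨p, hp, hpd⟩ := exists_path G (Rst src dst ψ) (by
    rintro u v ⟨e, he | he⟩
    · rw [← he.1, ← he.2.1]; exact adj_src_dst e
    · rw [← he.1, ← he.2.1]; exact (adj_src_dst e).symm) hreach
  obtain ⟨x, hxb, hxe, hxs⟩ := path_flow G _ _ ψ p hp hpd
  let f : E0 G s(x1, y1) s(x2, y2) → ℤ := fun e => ψ e + x e
  have hfb : ∀ v, bd src dst f v = bet x1 y1 x2 y2 v := by
    intro v
    simp only [f]
    rw [bd_add, hψb, hxb, bet]; ring
  have hf0 : ∀ e, f e ≠ 0 := by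
    intro e
    by_cases h0 : ψ e = 0
    · obtain ⟨S, hS⟩ := hψz e h0
      have h1 := sum_bd_cross src dst f S
      have h2 := sum_bd_cross src dst ψ0 S
      rw [Finset.sum_congr rfl (fun v _ => hfb v), hS, Finset.sum_singleton] at h1
      rw [Finset.sum_congr rfl (fun v _ => hb v), ← Finset.mul_sum, h1, hS, Finset.sum_singleton] at h2
      intro hf
      have := hnz e
      rw [hf] at h2
      split_ifs at h2 <;> simp at h2 <;> omega
    · have := hxs e
      simp only [f]; omega
  have hf6 : ∀ e, |f e| ≤ 6 := by
    intro e
    have h1 := abs_le.1 (hψ5 e)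
    have := hxs e
    rw [abs_le]; simp only [f]; omega
  have hf6' : ∀ e, |f e| = 6 → e.1 ∈ p.edges := by
    intro e he
    apply hxe
    intro h0
    have h1 := hψ5 e
    simp only [f, h0, add_zero] at he
    omega
  let φ : Sym2 V → ℤ := fun e => if h : e ∈ G.edgeSet ∧ e ≠ s(x1, y1) ∧ e ≠ s(x2, y2) then f ⟨e, h⟩ else 1
  let τ : V → Sym2 V → ℤ := fun v e => if h : e ∈ G.edgeSet ∧ e ≠ s(x1, y1) ∧ e ≠ s(x2, y2) then
    (if v = src (⟨e, h⟩ : E0 G s(x1, y1) s(x2, y2)) then -1 else 1) else if e = s(x1, y1) then 1 else -1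
  have hφE : ∀ e : E0 G s(x1, y1) s(x2, y2), φ e.1 = f e := by
    intro e; simp only [φ]; rw [dif_pos e.2]
  have hτE : ∀ (v : V) (e : E0 G s(x1, y1) s(x2, y2)), τ v e.1 = if v = src e then -1 else 1 := by
    intro v e; simp only [τ]; rw [dif_pos e.2]
  have hφ1 : φ s(x1, y1) = 1 := by simp [φ]
  have hφ2 : φ s(x2, y2) = 1 := by simp [φ]
  have hτ1 : ∀ v, τ v s(x1, y1) = 1 := by intro v; simp [τ]
  have hτ2 : ∀ v, τ v s(x2, y2) = -1 := by intro v; simp [τ, hne.symm]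
  have hcase : ∀ e ∈ G.edgeSet, e = s(x1, y1) ∨ e = s(x2, y2) ∨
      ∃ e' : E0 G s(x1, y1) s(x2, y2), e = e'.1 := by
    intro e he
    by_cases h1 : e = s(x1, y1)
    · exact Or.inl h1
    · by_cases h2 : e = s(x2, y2)
      · exact Or.inr (Or.inl h2)
      · exact Or.inr (Or.inr ⟨⟨e, he, h1, h2⟩, rfl⟩)
  refine ⟨τ, φ, ⟨⟨⟨?_, ?_⟩, ?_⟩, ?_⟩, hφ1, hφ2, y1, y2, p, hp, ?_⟩
  · intro v e
    simp only [τ]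
    split_ifs <;> simp
  · intro u v huv
    rcases hcase s(u, v) huv with h | h | ⟨e, h⟩
    · rw [h, hτ1, hτ1, hn1.2]; norm_num
    · rw [h, hτ2, hτ2, hn2.2]; norm_num
    · rw [h, hτE, hτE, hposσ]
      have hnd := (adj_src_dst e).ne
      rw [← src_dst e, Sym2.eq_iff] at h
      rcases h with ⟨rfl, rfl⟩ | ⟨rfl, rfl⟩
      · simp [hnd.symm]
      · simp [hnd.symm]
  · intro v
    rw [kirch G x1 y1 x2 y2 hne hn1.1 hn2.1 τ φ ?_ ?_ ?_ v]
    · have : bd src dst (fun e : E0 G s(x1, y1) s(x2, y2) => - (τ (src e) e.1 * φ e.1)) v = bd src dst f v := by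
        congr 1
        funext e
        rw [hτE, hφE]; simp
      rw [this, hfb, hτ1, hτ2, hφ1, hφ2, bet]
      ring
    · intro e
      have hnd := (adj_src_dst e).ne
      rw [hτE, hτE]; simp [hnd.symm]
    · rw [hτ1, hτ1]
    · rw [hτ2, hτ2]
  · intro e he
    rcases hcase e he with h | h | ⟨e', h⟩
    · rw [h, hφ1]; norm_num
    · rw [h, hφ2]; norm_num
    · rw [h, hφE]
      have := hf6 e'
      exact ⟨abs_pos.2 (hf0 e'), by omega⟩
  · intro e he h6
    rcases hcase e he with h | h | ⟨e', h⟩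
    · rw [h, hφ1] at h6; norm_num at h6
    · rw [h, hφ2] at h6; norm_num at h6
    · rw [h, hφE] at h6
      rw [h]; exact hf6' e' h6

end graph

/-- Every flow-admissible signed cubic graph with exactly two negative
edges admits a nowhere-zero 7-flow with value 1 on both negative edges such that all
edges with flow value 6 lie on a single path. -/
theorem stmt17 [Fintype V] (G : SimpleGraph V) (σ : Sym2 V → ℤ)
    (hσ : IsSignature G σ) (hcubic : CubicGraph G) (hadm : FlowAdmissible G σ)
    (n₁ n₂ : Sym2 V) (hne : n₁ ≠ n₂) (hN : NegEdges G σ = {n₁, n₂}) :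
    ∃ τ φ, IsNZFlow G σ 7 τ φ ∧ φ n₁ = 1 ∧ φ n₂ = 1 ∧
      ∃ (a b : V) (p : G.Walk a b), p.IsPath ∧
        ∀ e ∈ G.edgeSet, |φ e| = 6 → e ∈ p.edges := by
  obtain ⟨k, τ, φ, ⟨⟨hτ, hor⟩, hK⟩, hnz⟩ := hadm
  induction n₁ using Sym2.ind with
  | _ x1 y1 =>
  induction n₂ using Sym2.ind with
  | _ x2 y2 =>
  have hn1 : s(x1, y1) ∈ NegEdges G σ := by rw [hN]; simp
  have hn2 : s(x2, y2) ∈ NegEdges G σ := by rw [hN]; simp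
  have hposσ : ∀ e : E0 G s(x1, y1) s(x2, y2), σ e.1 = 1 := by
    intro e
    rcases hσ e.1 e.2.1 with h | h
    · exact h
    · exfalso
      have : e.1 ∈ NegEdges G σ := ⟨e.2.1, h⟩
      rw [hN] at this
      rcases this with h | h
      · exact e.2.2.1 h
      · exact e.2.2.2 h
  have hτpos : ∀ e : E0 G s(x1, y1) s(x2, y2), τ (dst e) e.1 = - τ (src e) e.1 := by
    intro e
    have h1 := hor _ _ (adj_src_dst e)
    rw [src_dst, hposσ] at h1
    rcases hτ (src e) e.1 with h2 | h2 <;> rcases hτ (dst e) e.1 with h3 | h3 <;>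
      rw [h2, h3] at h1 <;> omega
  have hτneg : ∀ x y, s(x, y) ∈ NegEdges G σ → τ y s(x, y) = τ x s(x, y) := by
    intro x y h
    have h1 := hor x y h.1
    rw [h.2] at h1
    rcases hτ x s(x, y) with h2 | h2 <;> rcases hτ y s(x, y) with h3 | h3 <;>
      rw [h2, h3] at h1 <;> omega
  have hτ0 : ∀ v e, τ v e ≠ 0 := by
    intro v e
    rcases hτ v e with h | h <;> rw [h] <;> norm_num
  have hφ0 : ∀ e ∈ G.edgeSet, φ e ≠ 0 := fun e he => abs_pos.1 (hnz e he).1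
  let ψ0 : E0 G s(x1, y1) s(x2, y2) → ℤ := fun e => - (τ (src e) e.1 * φ e.1)
  have hψ0 : ∀ e, ψ0 e ≠ 0 := fun e => neg_ne_zero.2 (mul_ne_zero (hτ0 _ _) (hφ0 _ e.2.1))
  have hkir := kirch G x1 y1 x2 y2 hne hn1.1 hn2.1 τ φ hτpos (hτneg _ _ hn1) (hτneg _ _ hn2)
  have hc : τ x1 s(x1, y1) * φ s(x1, y1) ≠ 0 := mul_ne_zero (hτ0 _ _) (hφ0 _ hn1.1)
  generalize hcdef : τ x1 s(x1, y1) * φ s(x1, y1) = c at hkir hc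
  generalize τ x2 s(x2, y2) * φ s(x2, y2) = d at hkir
  have hbd0 : ∀ v, bd src dst ψ0 v =
      c * ((if v = x1 then 1 else 0) + (if v = y1 then 1 else 0))
      + d * ((if v = x2 then 1 else 0) + (if v = y2 then 1 else 0)) := by
    intro v
    have h1 := hkir v
    rw [hK v] at h1
    change 0 = - bd src dst ψ0 v + _ + _ at h1
    linarith
  have hd : d = - c := by
    have h1 := sum_bd_univ src dst ψ0
    rw [Finset.sum_congr rfl (fun v _ => hbd0 v), Finset.sum_add_distrib, ← Finset.mul_sum,
      ← Finset.mul_sum, Finset.sum_add_distrib, Finset.sum_add_distrib] at h1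
    simp at h1
    linarith
  have hb : ∀ v, bd src dst ψ0 v = c * bet x1 y1 x2 y2 v := by
    intro v; rw [hbd0, hd, bet]; ring
  rcases pairing src dst x1 y1 x2 y2 c hc ψ0 hb with hx | hx
  · exact main_aux G σ hσ x1 y1 x2 y2 hne hN c hc ψ0 hψ0 hb hx
  · have hb' : ∀ v, bd src dst ψ0 v = c * bet x1 y1 y2 x2 v := by
      intro v; rw [hb, bet, bet]; ring
    have hsw : s(x2, y2) = s(y2, x2) := Sym2.eq_swap
    clear_value ψ0
    rw [hsw] at hne hN ⊢
    revert hx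
    revert ψ0
    rw [hsw]
    intro ψ0 hψ0 _ _ hb' hx
    exact main_aux G σ hσ x1 y1 y2 x2 hne hN c hc ψ0 hψ0 hb' hx
end

section
/- Assume every bridgeless graph admits a nowhere-zero 5-flow (Tutte's 5-flow conjecture). Then every bridgeless flow-admissible signed graph (G, σ) with exactly two negative edges n₁, n₂ admits a nowhere-zero 6-flow (D, φ) with φ(e) > 0 for all e, φ(n₁) = φ(n₂) = 1, and there is a path P with φ⁻¹(5) ⊆ E(P) and φ⁻¹(1) ∩ E(P) = ∅. -/
open Finset SimpleGraph

attribute [local instance] Classical.propDecidable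

variable {V : Type}

lemma cut_sum [Fintype V] (K : V → V → ℤ) (hK : ∀ u v, K v u = - K u v) (S : Set V) :
    ∑ v, (if v ∈ S then ∑ w, K v w else 0) =
      ∑ v, ∑ w, (if v ∈ S ∧ w ∉ S then K v w else 0) := by
  have h0 : ∑ v, ∑ w, (if v ∈ S ∧ w ∈ S then K v w else 0) = 0 := by
    have h1 : ∑ v, ∑ w, (if v ∈ S ∧ w ∈ S then K v w else 0) =
        - ∑ v, ∑ w, (if v ∈ S ∧ w ∈ S then K v w else 0) := by
      conv_lhs => rw [Finset.sum_comm]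
      rw [← Finset.sum_neg_distrib]
      refine Finset.sum_congr rfl fun v _ => ?_
      rw [← Finset.sum_neg_distrib]
      refine Finset.sum_congr rfl fun w _ => ?_
      by_cases h : v ∈ S <;> by_cases h' : w ∈ S <;> simp [h, h', hK v w]
    omega
  have h2 : ∑ v, ∑ w, (if v ∈ S ∧ w ∉ S then K v w else 0) =
      ∑ v, ∑ w, (if v ∈ S ∧ w ∉ S then K v w else 0) +
      ∑ v, ∑ w, (if v ∈ S ∧ w ∈ S then K v w else 0) := by rw [h0, add_zero]
  rw [h2, ← Finset.sum_add_distrib]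
  refine Finset.sum_congr rfl fun v _ => ?_
  rw [← Finset.sum_add_distrib]
  by_cases h : v ∈ S
  · simp only [h, if_true, true_and]
    refine Finset.sum_congr rfl fun w _ => ?_
    by_cases h' : w ∈ S <;> simp [h']
  · simp [h]

lemma cut_none [Fintype V] (K : V → V → ℤ) (S : Set V)
    (h : ∀ u v, u ∈ S → v ∉ S → K u v = 0) :
    ∑ v, ∑ w, (if v ∈ S ∧ w ∉ S then K v w else 0) = 0 := by
  refine Finset.sum_eq_zero fun v _ => Finset.sum_eq_zero fun w _ => ?_
  split_ifs with h'
  · exact h v w h'.1 h'.2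
  · rfl

lemma cut_one [Fintype V] (K : V → V → ℤ) (S : Set V) (a b : V) (ha : a ∈ S) (hb : b ∉ S)
    (h : ∀ u v, u ∈ S → v ∉ S → K u v ≠ 0 → u = a ∧ v = b) :
    ∑ v, ∑ w, (if v ∈ S ∧ w ∉ S then K v w else 0) = K a b := by
  rw [Finset.sum_eq_single a, Finset.sum_eq_single b]
  · simp [ha, hb]
  · intro w _ hw
    split_ifs with h'
    · by_contra hc
      exact hw (h _ _ h'.1 h'.2 hc).2
    · rfl
  · simp
  · intro v _ hv
    refine Finset.sum_eq_zero fun w _ => ?_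
    split_ifs with h'
    · by_contra hc
      exact hv (h _ _ h'.1 h'.2 hc).1
    · rfl
  · simp

lemma cut_le [Fintype V] (K : V → V → ℤ) (S : Set V) (a b : V)
    (h : ∀ u v, u ∈ S → v ∉ S → 0 < K u v → u = a ∧ v = b ∧ K u v ≤ 1) :
    ∑ v, ∑ w, (if v ∈ S ∧ w ∉ S then K v w else 0) ≤ 1 := by
  calc ∑ v, ∑ w, (if v ∈ S ∧ w ∉ S then K v w else 0)
      ≤ ∑ v, ∑ w, (if v = a then (if w = b then (1:ℤ) else 0) else 0) := by
        refine Finset.sum_le_sum fun v _ => Finset.sum_le_sum fun w _ => ?_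
        split_ifs with h1 h2 h3 h3
        · by_contra hc
          have := h v w h1.1 h1.2 (by omega)
          omega
        · by_contra hc
          have := h v w h1.1 h1.2 (by omega)
          tauto
        · by_contra hc
          have := h v w h1.1 h1.2 (by omega)
          tauto
        · norm_num
        · norm_num
        · norm_num
    _ = 1 := by simp

lemma dirwalk (G : SimpleGraph V) (R : V → V → Prop) (hR : ∀ u v, R u v → G.Adj u v)
    {a b : V} (h : Relation.ReflTransGen R a b) :
    ∃ p : G.Walk a b, p.IsPath ∧ ∀ d ∈ p.darts, R d.fst d.snd := by
  have : ∃ p : G.Walk a b, ∀ d ∈ p.darts, R d.fst d.snd := by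
    induction h using Relation.ReflTransGen.head_induction_on with
    | refl => exact ⟨Walk.nil, by simp⟩
    | head h1 _ ih =>
      obtain ⟨p, hp⟩ := ih
      refine ⟨Walk.cons (hR _ _ h1) p, ?_⟩
      intro d hd
      rw [Walk.darts_cons, List.mem_cons] at hd
      rcases hd with rfl | hd
      · exact h1
      · exact hp d hd
  obtain ⟨p, hp⟩ := this
  exact ⟨p.bypass, p.bypass_isPath, fun d hd => hp d (p.darts_bypass_subset_darts hd)⟩

lemma pathflow_aux [Fintype V] (G : SimpleGraph V) (R : V → V → Prop) {a b : V} (p : G.Walk a b)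
    (hp : p.IsPath) (hd : ∀ d ∈ p.darts, R d.fst d.snd) :
    ∃ P : V → V → ℤ, (∀ u v, P v u = - P u v) ∧
      (∀ v, ∑ w, P v w = (if v = a then 1 else 0) - (if v = b then 1 else 0)) ∧
      ∀ u v, (P u v = 1 ∧ R u v ∧ s(u,v) ∈ p.edges) ∨
        (P u v = -1 ∧ R v u ∧ s(u,v) ∈ p.edges) ∨ (P u v = 0 ∧ s(u,v) ∉ p.edges) := by
  induction p with
  | nil => exact ⟨fun _ _ => 0, by simp, by simp, by simp⟩
  | @cons x y z hxy p ih =>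
    rw [Walk.cons_isPath_iff] at hp
    obtain ⟨P, h1, h2, h3⟩ := ih hp.1 (fun d hdd => hd d (by simp [hdd]))
    have hR : R x y := hd ⟨(x, y), hxy⟩ (by simp)
    have hne : x ≠ y := hxy.ne
    have hx : ∀ v, s(x, v) ∉ p.edges := fun v hv => hp.2 (Walk.fst_mem_support_of_mem_edges p hv)
    have hx' : ∀ v, P x v = 0 := fun v => by
      have := h3 x v
      have := hx v
      tauto
    have hx2 : ∀ v, P v x = 0 := fun v => by rw [h1 x v, hx' v]; rfl
    refine ⟨fun u v => P u v + ((if u = x then (if v = y then 1 else 0) else 0) -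
      (if u = y then (if v = x then 1 else 0) else 0)), ?_, ?_, ?_⟩
    · intro u v
      simp only [h1 u v]
      by_cases a1 : u = x <;> by_cases a2 : v = x <;> by_cases a3 : u = y <;>
        by_cases a4 : v = y <;> simp [a1, a2, a3, a4, hne, hne.symm] <;> ring
    · intro v
      simp only [Finset.sum_add_distrib, Finset.sum_sub_distrib, h2 v]
      by_cases hvx : v = x
      · subst hvx; simp [hne]; ring
      · by_cases hvy : v = y <;> simp [hvx, hvy]
    · intro u v
      simp only [Walk.edges_cons, List.mem_cons]
      by_cases hux : u = x
      · subst hux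
        rw [hx']
        by_cases hvy : v = y
        · subst hvy
          left; simp [hR, hne]
        · right; right
          refine ⟨by simp [hvy, hne], ?_⟩
          rintro (h | h)
          · rw [Sym2.eq_iff] at h; tauto
          · exact hx _ h
      · by_cases hvx : v = x
        · subst hvx
          rw [hx2]
          by_cases huy : u = y
          · subst huy
            right; left; simp [hR, hux, Sym2.eq_swap]
          · right; right
            refine ⟨by simp [huy, hux], ?_⟩
            rintro (h | h)
            · rw [Sym2.eq_iff] at h; tauto
            · rw [Sym2.eq_swap] at h; exact hx _ h
        · have he : s(u,v) ≠ s(x,y) := by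
            intro h; rw [Sym2.eq_iff] at h; tauto
          simpa [hux, hvx, he] using h3 u v

lemma pathflow [Fintype V] (G : SimpleGraph V) (R : V → V → Prop)
    (hR : ∀ u v, R u v → G.Adj u v) {a b : V} (h : Relation.ReflTransGen R a b) :
    ∃ (p : G.Walk a b) (P : V → V → ℤ), p.IsPath ∧ (∀ u v, P v u = - P u v) ∧
      (∀ v, ∑ w, P v w = (if v = a then 1 else 0) - (if v = b then 1 else 0)) ∧
      ∀ u v, (P u v = 1 ∧ R u v ∧ s(u,v) ∈ p.edges) ∨
        (P u v = -1 ∧ R v u ∧ s(u,v) ∈ p.edges) ∨ (P u v = 0 ∧ s(u,v) ∉ p.edges) := by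
  obtain ⟨p, hp, hd⟩ := dirwalk G R hR h
  obtain ⟨P, h1, h2, h3⟩ := pathflow_aux G R p hp hd
  exact ⟨p, P, hp, h1, h2, h3⟩

lemma sum_pair_lt [Fintype V] (f g : V → ℤ) (a : V)
    (h : ∀ v, |f v| ≤ |g v|) (ha : |f a| < |g a|) :
    (∑ v, |f v|).toNat < (∑ v, |g v|).toNat := by
  have h1 : ∑ v, |f v| < ∑ v, |g v| :=
    Finset.sum_lt_sum (fun v _ => h v) ⟨a, Finset.mem_univ _, ha⟩
  have h2 : 0 ≤ ∑ v, |f v| := Finset.sum_nonneg fun v _ => abs_nonneg _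
  omega

lemma mod5 [Fintype V] (G : SimpleGraph V) (a b : V) (n : ℕ) :
    ∀ f : V → V → ℤ, (∑ v, |∑ w, f v w|).toNat = n →
    (∀ u v, f v u = - f u v) → (∀ u v, f u v ≠ 0 ↔ G.Adj u v) → (∀ u v, |f u v| < 5) →
    f a b = 1 → (∀ v, (5:ℤ) ∣ ∑ w, f v w) →
    ∃ g : V → V → ℤ, (∀ u v, g v u = - g u v) ∧ (∀ u v, g u v ≠ 0 ↔ G.Adj u v) ∧
      (∀ u v, |g u v| < 5) ∧ g a b = 1 ∧ ∀ v, ∑ w, g v w = 0 := by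
  induction n using Nat.strong_induction_on with
  | _ n ih =>
  intro f hn hanti hadj hlt hab hdvd
  by_cases hz : ∀ v, ∑ w, f v w = 0
  · exact ⟨f, hanti, hadj, hlt, hab, hz⟩
  have htot : ∑ v, ∑ w, f v w = 0 := by
    have := cut_sum f hanti Set.univ
    simpa using this
  have hpos : ∃ v, 0 < ∑ w, f v w := by
    by_contra hc
    push Not at hc
    apply hz
    have := (Finset.sum_eq_zero_iff_of_nonpos (fun v _ => hc v)).1 htot
    exact fun v => this v (Finset.mem_univ v)
  obtain ⟨x, hx⟩ := hpos
  let R : V → V → Prop := fun u v => 0 < f u v ∧ s(u,v) ≠ s(a,b)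
  have hba : f b a = -1 := by rw [hanti a b, hab]
  have hy : ∃ y, Relation.ReflTransGen R x y ∧ ∑ w, f y w < 0 := by
    by_contra hc
    push Not at hc
    let S : Set V := {y | Relation.ReflTransGen R x y}
    have h1 := cut_sum f hanti S
    have h2 : ∑ v, ∑ w, (if v ∈ S ∧ w ∉ S then f v w else 0) ≤ 1 := by
      refine cut_le f S a b ?_
      intro u v hu hv huv
      have : s(u,v) = s(a,b) := by
        by_contra hne
        exact hv (Relation.ReflTransGen.tail hu ⟨huv, hne⟩)
      rw [Sym2.eq_iff] at this
      rcases this with ⟨rfl, rfl⟩ | ⟨rfl, rfl⟩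
      · exact ⟨rfl, rfl, hab.le⟩
      · omega
    have h3 : ∑ w, f x w ≤ ∑ v, (if v ∈ S then ∑ w, f v w else 0) := by
      have : ∑ w, f x w = (if x ∈ S then ∑ w, f x w else 0) := by
        rw [if_pos]; exact Relation.ReflTransGen.refl
      rw [this]
      refine Finset.single_le_sum (f := fun v => if v ∈ S then ∑ w, f v w else 0) ?_ (Finset.mem_univ x)
      intro v _
      show 0 ≤ (if v ∈ S then ∑ w, f v w else 0)
      split_ifs with h
      · exact hc v h
      · exact le_rfl
    have := hdvd x
    omega
  obtain ⟨y, hxy, hy⟩ := hy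
  obtain ⟨p, P, -, hP1, hP2, hP3⟩ := pathflow G R
    (fun u v h => (hadj u v).1 h.1.ne') hxy
  have hne : x ≠ y := by rintro rfl; omega
  have hrow : ∀ v, ∑ w, (f v w - 5 * P v w) = ∑ w, f v w -
      5 * ((if v = x then 1 else 0) - (if v = y then 1 else 0)) := by
    intro v
    rw [Finset.sum_sub_distrib, ← Finset.mul_sum, hP2]
  have hval : ∀ u v, (f u v - 5 * P u v = f u v) ∨ (0 < f u v ∧ f u v - 5 * P u v = f u v - 5) ∨
      (f u v < 0 ∧ f u v - 5 * P u v = f u v + 5) := by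
    intro u v
    have := hanti u v
    rcases hP3 u v with ⟨h, h', -⟩ | ⟨h, h', -⟩ | ⟨h, -⟩
    · right; left; exact ⟨h'.1, by rw [h]; ring⟩
    · right; right; have := h'.1; exact ⟨by omega, by rw [h]; ring⟩
    · left; rw [h]; ring
  refine ih _ ?_ (fun u v => f u v - 5 * P u v) rfl ?_ ?_ ?_ ?_ ?_
  · rw [← hn]
    refine sum_pair_lt _ _ x ?_ ?_
    · intro v
      rw [hrow]
      have hdx := hdvd x
      have hdy := hdvd y
      by_cases h1 : v = x
      · subst h1
        simp only [if_true, hne, if_false]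
        rw [abs_of_pos hx, abs_of_nonneg] <;> omega
      · by_cases h2 : v = y
        · subst h2
          simp only [if_true, h1, if_false]
          rw [abs_of_neg hy, abs_of_nonpos] <;> omega
        · simp [h1, h2]
    · rw [hrow]
      have hdx := hdvd x
      simp only [if_true, hne, if_false]
      rw [abs_of_pos hx, abs_of_nonneg] <;> omega
  · intro u v
    show f v u - 5 * P v u = - (f u v - 5 * P u v)
    rw [hanti u v, hP1 u v]; ring
  · intro u v
    show f u v - 5 * P u v ≠ 0 ↔ _
    rw [← hadj]
    have := hlt u v
    rw [abs_lt] at this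
    have := hval u v
    omega
  · intro u v
    show |f u v - 5 * P u v| < 5
    have := hlt u v
    rw [abs_lt] at this ⊢
    have := hval u v
    omega
  · show f a b - 5 * P a b = 1
    rcases hP3 a b with ⟨h, h', -⟩ | ⟨h, h', -⟩ | ⟨h, -⟩
    · exact absurd rfl h'.2
    · exact absurd Sym2.eq_swap h'.2
    · rw [h, hab]; ring
  · intro v
    show (5:ℤ) ∣ ∑ w, (f v w - 5 * P v w)
    rw [hrow]
    exact dvd_sub (hdvd v) (dvd_mul_right _ _)

lemma bmod5_neg (x : ℤ) : Int.bmod (-x) 5 = - Int.bmod x 5 := by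
  simp only [Int.bmod]; omega

lemma flow_fix [Fintype V] (H : SimpleGraph V)
    (h : ∃ τ φ, IsNZFlow H allPos 5 τ φ) (a b : V) (hab : H.Adj a b) :
    ∃ g : V → V → ℤ, (∀ u v, g v u = - g u v) ∧ (∀ u v, g u v ≠ 0 ↔ H.Adj u v) ∧
      (∀ u v, |g u v| < 5) ∧ g a b = 1 ∧ ∀ v, ∑ w, g v w = 0 := by
  obtain ⟨τ, φ, ⟨⟨ht, hor⟩, hsum⟩, hnz⟩ := h
  let f : V → V → ℤ := fun v w => if H.Adj v w then τ v s(v, w) * φ s(v, w) else 0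
  have hf : ∀ v w, f v w = if H.Adj v w then τ v s(v, w) * φ s(v, w) else 0 := fun _ _ => rfl
  have hanti : ∀ u v, f v u = - f u v := by
    intro u v
    rw [hf, hf]
    by_cases hA : H.Adj u v
    · rw [if_pos hA, if_pos hA.symm, Sym2.eq_swap]
      have h1 := hor u v hA
      simp only [allPos] at h1
      rcases ht u s(u,v) with h2 | h2 <;> rcases ht v s(u,v) with h3 | h3 <;>
        rw [h2, h3] at h1 ⊢ <;> omega
    · rw [if_neg hA, if_neg (fun h => hA h.symm)]; rfl
  have hbd : ∀ u v, H.Adj u v → 0 < |f u v| ∧ |f u v| < 5 := by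
    intro u v hA
    rw [hf, if_pos hA]
    have := hnz s(u,v) hA
    rcases ht u s(u,v) with h2 | h2 <;> rw [h2] <;> simpa [abs_neg] using this
  obtain ⟨t, ht1⟩ : ∃ t : ℤ, (t * f a b - 1) % 5 = 0 ∧ ¬ (5:ℤ) ∣ t := by
    have := hbd a b hab
    rw [abs_pos, abs_lt] at this
    obtain ⟨h1, h2, h3⟩ := this
    generalize f a b = c at *
    obtain rfl | rfl | rfl | rfl | rfl | rfl | rfl | rfl :
      c = 1 ∨ c = 2 ∨ c = 3 ∨ c = 4 ∨ c = -1 ∨ c = -2 ∨ c = -3 ∨ c = -4 := by omega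
    · exact ⟨1, by norm_num⟩
    · exact ⟨3, by norm_num⟩
    · exact ⟨2, by norm_num⟩
    · exact ⟨4, by norm_num⟩
    · exact ⟨4, by norm_num⟩
    · exact ⟨2, by norm_num⟩
    · exact ⟨3, by norm_num⟩
    · exact ⟨1, by norm_num⟩
  have hb : ∀ x : ℤ, ∃ k, Int.bmod x 5 = x - 5 * k ∧ -2 ≤ x - 5 * k ∧ x - 5 * k ≤ 2 := by
    intro x
    refine ⟨(x - Int.bmod x 5) / 5, ?_⟩
    simp only [Int.bmod]; omega
  refine mod5 H a b _ (fun u v => Int.bmod (t * f u v) 5) rfl ?_ ?_ ?_ ?_ ?_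
  · intro u v
    show Int.bmod (t * f v u) 5 = - Int.bmod (t * f u v) 5
    rw [hanti u v, ← bmod5_neg]; congr 1; ring
  · intro u v
    show Int.bmod (t * f u v) 5 ≠ 0 ↔ _
    by_cases hA : H.Adj u v
    · simp only [hA, iff_true]
      intro h0
      obtain ⟨k, hk, -⟩ := hb (t * f u v)
      have h5 : (5:ℤ) ∣ t * f u v := ⟨k, by omega⟩
      have := hbd u v hA
      rw [abs_pos, abs_lt] at this
      rcases (Int.Prime.dvd_mul' (p := 5) (by norm_num) (by exact_mod_cast h5)) with h | h
      · exact ht1.2 (by exact_mod_cast h)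
      · obtain ⟨j, hj⟩ := h
        push_cast at hj
        omega
    · have : f u v = 0 := by rw [hf, if_neg hA]
      simp [this, hA]
  · intro u v
    show |Int.bmod (t * f u v) 5| < 5
    obtain ⟨k, hk, h⟩ := hb (t * f u v)
    rw [abs_lt]; omega
  · show Int.bmod (t * f a b) 5 = 1
    obtain ⟨k, hk, h⟩ := hb (t * f a b)
    have := ht1.1
    omega
  · intro v
    show (5:ℤ) ∣ ∑ w, Int.bmod (t * f v w) 5
    choose k hk using hb
    have : ∑ w, Int.bmod (t * f v w) 5 = ∑ w, (t * f v w - 5 * k (t * f v w)) :=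
      Finset.sum_congr rfl fun w _ => (hk _).1
    rw [this, Finset.sum_sub_distrib, ← Finset.mul_sum, ← Finset.mul_sum]
    have : ∑ w, f v w = 0 := hsum v
    rw [this]
    simp

lemma bridgeless_iff (G : SimpleGraph V) : Bridgeless G ↔
    ∀ (S : Set V) u v, u ∈ S → v ∉ S → G.Adj u v →
      ∃ u' v', u' ∈ S ∧ v' ∉ S ∧ G.Adj u' v' ∧ s(u', v') ≠ s(u, v) := by
  constructor
  · intro h S u v hu hv hA
    by_contra hc
    push Not at hc
    have := h s(u,v) hA
    rw [isBridge_iff, not_not] at this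
    obtain ⟨p⟩ := this
    have key : ∀ x y (q : (G.deleteEdges {s(u, v)}).Walk x y), x ∈ S → y ∈ S := by
      intro x y q
      induction q with
      | nil => exact id
      | @cons x y z hxy q ih =>
        intro hx
        apply ih
        by_contra hy
        rw [deleteEdges_adj] at hxy
        exact hxy.2 (hc x y hx hy hxy.1)
    exact hv (key _ _ p hu)
  · intro h e he
    induction e with
    | _ u v =>
    rw [isBridge_iff, not_not]
    by_contra hc
    obtain ⟨u', v', h1, h2, h3, h4⟩ := h {w | (G.deleteEdges {s(u, v)}).Reachable u w} u v
      (Reachable.refl _) hc he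
    apply h2
    refine Reachable.trans h1 (Adj.reachable ?_)
    rw [deleteEdges_adj]
    exact ⟨h3, h4⟩

def FlowN [Fintype V] (G : SimpleGraph V) (N : Sym2 V → Prop) (F : V → V → ℤ) : Prop :=
  (∀ u v, F u v ≠ 0 ↔ G.Adj u v) ∧ (∀ v, ∑ w, F v w = 0) ∧
    ∀ u v, (N s(u,v) → F v u = F u v) ∧ (¬ N s(u,v) → F v u = - F u v)

lemma switchN [Fintype V] (G : SimpleGraph V) (N N' : Sym2 V → Prop) (F : V → V → ℤ) (S : Set V)
    (hF : FlowN G N F)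
    (h : ∀ u v, G.Adj u v → (N' s(u,v) ↔ (N s(u,v) ↔ (u ∈ S ↔ v ∈ S)))) :
    FlowN G N' (fun v w => (if v ∈ S then 1 else -1) * F v w) := by
  obtain ⟨h1, h2, h3⟩ := hF
  refine ⟨?_, ?_, ?_⟩
  · intro u v
    rw [← h1]
    by_cases hu : u ∈ S <;> simp [hu]
  · intro v
    rw [← Finset.mul_sum, h2, mul_zero]
  · intro u v
    by_cases hA : G.Adj u v
    · have := h u v hA
      have h3 := h3 u v
      by_cases hu : u ∈ S <;> by_cases hv : v ∈ S <;> by_cases hN : N s(u,v) <;>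
        simp_all
    · have a1 : F u v = 0 := by by_contra hc; exact hA ((h1 _ _).1 hc)
      have a2 : F v u = 0 := by by_contra hc; exact hA ((h1 _ _).1 hc).symm
      simp [a1, a2]

lemma abs_switch (F : V → V → ℤ) (S : Set V) (u v : V) :
    |(fun v w => (if v ∈ S then 1 else -1) * F v w) u v| = |F u v| := by
  by_cases hu : u ∈ S <;> simp [hu]

def NN (x₁ y₁ x₂ y₂ : V) : Sym2 V → Prop := fun e => e = s(x₁, y₁) ∨ e = s(x₂, y₂)

lemma sum_edge [Fintype V] (x y : V) (hxy : x ≠ y) (c : ℤ) (v : V) :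
    ∑ w, (if s(v, w) = s(x, y) then c else 0) =
      c * ((if v = x then 1 else 0) + (if v = y then 1 else 0)) := by
  by_cases h1 : v = x
  · subst h1
    have : ∀ w, (s(v, w) = s(v, y)) = (w = y) := by
      intro w; simp; intro h; exact absurd h hxy
    simp [hxy]
  · by_cases h2 : v = y
    · subst h2
      have : ∀ w, (s(v, w) = s(x, v)) = (w = x) := by
        intro w; rw [Sym2.eq_swap (a := x)]; simp; intro h; exact absurd h h1
      simp [this, h1]
    · have : ∀ w, ¬ (s(v, w) = s(x, y)) := by
        intro w; rw [Sym2.eq_iff]; tauto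
      simp [this, h1, h2]

def FlowK [Fintype V] (G : SimpleGraph V) (x₁ y₁ x₂ y₂ : V) (K : V → V → ℤ) (c : ℤ) : Prop :=
  (∀ u v, K v u = - K u v) ∧
  (∀ u v, K u v ≠ 0 ↔ G.Adj u v ∧ s(u,v) ≠ s(x₁,y₁) ∧ s(u,v) ≠ s(x₂,y₂)) ∧
  (∀ v, ∑ w, K v w = c * ((if v = x₂ then 1 else 0) + (if v = y₂ then 1 else 0)
    - (if v = x₁ then 1 else 0) - (if v = y₁ then 1 else 0)))

lemma K_cut [Fintype V] (G : SimpleGraph V) (x₁ y₁ x₂ y₂ : V) (K : V → V → ℤ) (c : ℤ)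
    (h : FlowK G x₁ y₁ x₂ y₂ K c) (S : Set V) :
    ∑ v, ∑ w, (if v ∈ S ∧ w ∉ S then K v w else 0) =
      c * ((if x₂ ∈ S then 1 else 0) + (if y₂ ∈ S then 1 else 0)
    - (if x₁ ∈ S then 1 else 0) - (if y₁ ∈ S then 1 else 0)) := by
  rw [← cut_sum K h.1 S]
  have key : ∀ x : V, ∑ v, (if v ∈ S then (if v = x then (1:ℤ) else 0) else 0) =
      if x ∈ S then 1 else 0 := by
    intro x
    rw [Finset.sum_eq_single x]
    · simp
    · intro v _ hv; simp [hv]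
    · simp
  simp only [h.2.2]
  rw [← key x₁, ← key x₂, ← key y₁, ← key y₂, ← Finset.sum_add_distrib, ← Finset.sum_sub_distrib,
    ← Finset.sum_sub_distrib, Finset.mul_sum]
  refine Finset.sum_congr rfl fun v _ => ?_
  by_cases hv : v ∈ S <;> simp [hv]

lemma F_to_K [Fintype V] (G : SimpleGraph V) (x₁ y₁ x₂ y₂ : V) (F : V → V → ℤ)
    (hF : FlowN G (NN x₁ y₁ x₂ y₂) F) (h1 : G.Adj x₁ y₁) (h2 : G.Adj x₂ y₂)
    (hne : s(x₁, y₁) ≠ s(x₂, y₂)) :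
    F x₂ y₂ = - F x₁ y₁ ∧ ∃ K, FlowK G x₁ y₁ x₂ y₂ K (F x₁ y₁) := by
  obtain ⟨hA, hS, hN⟩ := hF
  let K : V → V → ℤ := fun v w => F v w - (if s(v,w) = s(x₁,y₁) then F x₁ y₁ else 0)
    - (if s(v,w) = s(x₂,y₂) then F x₂ y₂ else 0)
  have hK : ∀ v w, K v w = F v w - (if s(v,w) = s(x₁,y₁) then F x₁ y₁ else 0)
    - (if s(v,w) = s(x₂,y₂) then F x₂ y₂ else 0) := fun _ _ => rfl
  have hm : ∀ x y, NN x₁ y₁ x₂ y₂ s(x,y) → ∀ u v, s(u,v) = s(x,y) → F u v = F x y := by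
    intro x y hxy u v huv
    have := (hN x y).1 hxy
    rw [Sym2.eq_iff] at huv
    rcases huv with ⟨rfl, rfl⟩ | ⟨rfl, rfl⟩
    · rfl
    · exact this
  have hK1 : ∀ u v, s(u,v) = s(x₁,y₁) → K u v = 0 := by
    intro u v h
    rw [hK, if_pos h, if_neg (fun h' => hne (h.symm.trans h')), hm x₁ y₁ (Or.inl rfl) u v h]; ring
  have hK2 : ∀ u v, s(u,v) = s(x₂,y₂) → K u v = 0 := by
    intro u v h
    rw [hK, if_pos h, if_neg (fun h' => hne (h'.symm.trans h)), hm x₂ y₂ (Or.inr rfl) u v h]; ring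
  have hK3 : ∀ u v, s(u,v) ≠ s(x₁,y₁) → s(u,v) ≠ s(x₂,y₂) → K u v = F u v := by
    intro u v h h'
    rw [hK, if_neg h, if_neg h']; ring
  have hanti : ∀ u v, K v u = - K u v := by
    intro u v
    by_cases e1 : s(u,v) = s(x₁,y₁)
    · rw [hK1 u v e1, hK1 v u (by rw [← e1, Sym2.eq_swap])]; rfl
    by_cases e2 : s(u,v) = s(x₂,y₂)
    · rw [hK2 u v e2, hK2 v u (by rw [← e2, Sym2.eq_swap])]; rfl
    rw [hK3 u v e1 e2, hK3 v u (by rwa [Sym2.eq_swap]) (by rwa [Sym2.eq_swap])]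
    exact (hN u v).2 (by simp [NN, e1, e2])
  have hrow : ∀ v, ∑ w, K v w = - F x₁ y₁ * ((if v = x₁ then 1 else 0) + (if v = y₁ then 1 else 0))
      - F x₂ y₂ * ((if v = x₂ then 1 else 0) + (if v = y₂ then 1 else 0)) := by
    intro v
    simp only [hK]
    rw [Finset.sum_sub_distrib, Finset.sum_sub_distrib, hS, sum_edge _ _ h1.ne, sum_edge _ _ h2.ne]
    ring
  have htot : F x₂ y₂ = - F x₁ y₁ := by
    have h := cut_sum K hanti Set.univ
    simp [hrow, Finset.sum_sub_distrib, Finset.sum_add_distrib, ← Finset.mul_sum] at h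
    omega
  refine ⟨htot, K, hanti, ?_, ?_⟩
  · intro u v
    by_cases e1 : s(u,v) = s(x₁,y₁)
    · simp [hK1 u v e1, e1]
    by_cases e2 : s(u,v) = s(x₂,y₂)
    · simp [hK2 u v e2, e2]
    rw [hK3 u v e1 e2, hA]; tauto
  · intro v
    rw [hrow, htot]; ring

lemma K_to_F [Fintype V] (G : SimpleGraph V) (x₁ y₁ x₂ y₂ : V) (K : V → V → ℤ)
    (hK : FlowK G x₁ y₁ x₂ y₂ K 1) (h1 : G.Adj x₁ y₁) (h2 : G.Adj x₂ y₂)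
    (hne : s(x₁, y₁) ≠ s(x₂, y₂)) :
    ∃ F, FlowN G (NN x₁ y₁ x₂ y₂) F ∧
      (∀ u v, s(u,v) = s(x₁, y₁) → F u v = 1) ∧ (∀ u v, s(u,v) = s(x₂, y₂) → F u v = -1) ∧
      (∀ u v, s(u,v) ≠ s(x₁, y₁) → s(u,v) ≠ s(x₂, y₂) → F u v = K u v) := by
  obtain ⟨hanti, hA, hrow⟩ := hK
  let F : V → V → ℤ := fun v w => K v w + (if s(v,w) = s(x₁,y₁) then 1 else 0)
    + (if s(v,w) = s(x₂,y₂) then -1 else 0)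
  have hF : ∀ v w, F v w = K v w + (if s(v,w) = s(x₁,y₁) then 1 else 0)
    + (if s(v,w) = s(x₂,y₂) then -1 else 0) := fun _ _ => rfl
  have f1 : ∀ u v, s(u,v) = s(x₁, y₁) → F u v = 1 := by
    intro u v h
    have : K u v = 0 := by by_contra hc; exact ((hA u v).1 hc).2.1 h
    rw [hF, this, if_pos h, if_neg (fun h' => hne (h.symm.trans h'))]; rfl
  have f2 : ∀ u v, s(u,v) = s(x₂, y₂) → F u v = -1 := by
    intro u v h
    have : K u v = 0 := by by_contra hc; exact ((hA u v).1 hc).2.2 h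
    rw [hF, this, if_pos h, if_neg (fun h' => hne (h'.symm.trans h))]; rfl
  have f3 : ∀ u v, s(u,v) ≠ s(x₁, y₁) → s(u,v) ≠ s(x₂, y₂) → F u v = K u v := by
    intro u v h h'
    rw [hF, if_neg h, if_neg h']; ring
  refine ⟨F, ⟨?_, ?_, ?_⟩, f1, f2, f3⟩
  · intro u v
    by_cases e1 : s(u,v) = s(x₁,y₁)
    · rw [f1 u v e1]
      have : G.Adj u v := by rw [← mem_edgeSet, e1]; exact h1
      simp [this]
    by_cases e2 : s(u,v) = s(x₂,y₂)
    · rw [f2 u v e2]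
      have : G.Adj u v := by rw [← mem_edgeSet, e2]; exact h2
      simp [this]
    rw [f3 u v e1 e2, hA]; tauto
  · intro v
    simp only [hF]
    rw [Finset.sum_add_distrib, Finset.sum_add_distrib, hrow, sum_edge _ _ h1.ne, sum_edge _ _ h2.ne]
    ring
  · intro u v
    have hs : s(v,u) = s(u,v) := Sym2.eq_swap
    refine ⟨?_, ?_⟩
    · rintro (h | h)
      · rw [f1 u v h, f1 v u (hs.trans h)]
      · rw [f2 u v h, f2 v u (hs.trans h)]
    · intro h
      simp only [NN, not_or] at h
      rw [f3 u v h.1 h.2, f3 v u (by rw [hs]; exact h.1) (by rw [hs]; exact h.2), hanti]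

lemma adm0 [Fintype V] (G : SimpleGraph V) (x₁ y₁ x₂ y₂ : V) (K : V → V → ℤ) (c : ℤ) (hc : c ≠ 0)
    (h : FlowK G x₁ y₁ x₂ y₂ K c) (S : Set V)
    (hS : ∀ u v, u ∈ S → v ∉ S → G.Adj u v → s(u,v) = s(x₁,y₁) ∨ s(u,v) = s(x₂,y₂)) :
    ((if x₂ ∈ S then 1 else 0) + (if y₂ ∈ S then 1 else 0) : ℤ) =
     (if x₁ ∈ S then 1 else 0) + (if y₁ ∈ S then 1 else 0) := by
  have h1 := K_cut G x₁ y₁ x₂ y₂ K c h S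
  rw [cut_none K S] at h1
  · have := (mul_eq_zero.1 h1.symm).resolve_left hc
    linarith
  · intro u v hu hv
    by_contra hk
    have h2 := (h.2.1 u v).1 hk
    have := hS u v hu hv h2.1
    tauto

lemma adm1 [Fintype V] (G : SimpleGraph V) (x₁ y₁ x₂ y₂ : V) (K : V → V → ℤ) (c : ℤ)
    (h : FlowK G x₁ y₁ x₂ y₂ K c) (S : Set V) (p q : V) (hp : p ∈ S) (hq : q ∉ S)
    (hA : G.Adj p q) (e1 : s(p,q) ≠ s(x₁,y₁)) (e2 : s(p,q) ≠ s(x₂,y₂))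
    (hS : ∀ u v, u ∈ S → v ∉ S → G.Adj u v → s(u,v) = s(x₁,y₁) ∨ s(u,v) = s(x₂,y₂) ∨
      s(u,v) = s(p,q)) :
    ((if x₂ ∈ S then 1 else 0) + (if y₂ ∈ S then 1 else 0) : ℤ) ≠
     (if x₁ ∈ S then 1 else 0) + (if y₁ ∈ S then 1 else 0) := by
  intro heq
  have h1 := K_cut G x₁ y₁ x₂ y₂ K c h S
  rw [cut_one K S p q hp hq] at h1
  · refine ((h.2.1 p q).2 ⟨hA, e1, e2⟩) ?_
    rw [h1, heq]; ring
  · intro u v hu hv hk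
    have h2 := (h.2.1 u v).1 hk
    have h3 := hS u v hu hv h2.1
    have h4 : s(u,v) = s(p,q) := by tauto
    rw [Sym2.eq_iff] at h4
    rcases h4 with h4 | ⟨rfl, rfl⟩
    · exact h4
    · exact absurd hp hv

def NB (G : SimpleGraph V) : Prop :=
  ∀ (S : Set V) u v, u ∈ S → v ∉ S → G.Adj u v →
      ∃ u' v', u' ∈ S ∧ v' ∉ S ∧ G.Adj u' v' ∧ ¬ (u' = u ∧ v' = v)

lemma cross_eq (S : Set V) {a b u v : V} (h : s(a,b) = s(u,v)) (ha : a ∈ S)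
    (hv : v ∉ S) : a = u ∧ b = v := by
  rw [Sym2.eq_iff] at h
  rcases h with h | ⟨rfl, rfl⟩
  · exact h
  · exact absurd ha hv

lemma bridgeless_NB (G : SimpleGraph V) : Bridgeless G ↔ NB G := by
  rw [bridgeless_iff]
  constructor
  · intro h S u v hu hv hA
    obtain ⟨u', v', h1, h2, h3, h4⟩ := h S u v hu hv hA
    exact ⟨u', v', h1, h2, h3, fun h => h4 (by rw [h.1, h.2])⟩
  · intro h S u v hu hv hA
    obtain ⟨u', v', h1, h2, h3, h4⟩ := h S u v hu hv hA
    exact ⟨u', v', h1, h2, h3, fun h => h4 (cross_eq S h h1 hv)⟩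

def Bad1 (G : SimpleGraph V) (x₁ y₁ x₂ y₂ : V) (S : Set V) (u v : V) : Prop :=
  x₁ ∈ S ∧ x₂ ∈ S ∧ y₂ ∈ S ∧ y₁ ∉ S ∧ u ∈ S ∧ v ∉ S ∧ G.Adj u v ∧ ¬ (u = x₁ ∧ v = y₁) ∧
  ∀ a b, a ∈ S → b ∉ S → G.Adj a b → (a = x₁ ∧ b = y₁) ∨ (a = u ∧ b = v)

def CutA (G : SimpleGraph V) (x₁ y₁ x₂ y₂ : V) (S : Set V) : Prop :=
  ¬ (x₁ ∈ S ↔ y₁ ∈ S) ∧ ¬ (x₂ ∈ S ↔ y₂ ∈ S) ∧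
  ∀ a b, a ∈ S → b ∉ S → G.Adj a b → s(a,b) = s(x₁,y₁) ∨ s(a,b) = s(x₂,y₂)

lemma sub1 [Fintype V] (G : SimpleGraph V) (nb : NB G) (x₁ y₁ x₂ y₂ : V) (h1 : G.Adj x₁ y₁)
    (K : V → V → ℤ) (c : ℤ) (hc : c ≠ 0) (hK : FlowK G x₁ y₁ x₂ y₂ K c)
    (S T : Set V) (p q u v : V) (hS : Bad1 G x₁ y₁ x₂ y₂ S p q) (hT : Bad1 G q p x₂ y₂ T u v) :
    ∃ S', Bad1 G x₁ y₁ x₂ y₂ S' u v := by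
  obtain ⟨s1, s2, s3, s4, s5, s6, s7, s8, s9⟩ := hS
  obtain ⟨t1, t2, t3, t4, t5, t6, t7, t8, t9⟩ := hT
  have cr : ∀ a b, a ∈ S ∩ T → b ∉ S ∩ T → G.Adj a b → (a = x₁ ∧ b = y₁) ∨ (a = u ∧ b = v) := by
    rintro a b ⟨ha, ha'⟩ hb hA
    by_cases hbS : b ∈ S
    · have hbT : b ∉ T := fun h => hb ⟨hbS, h⟩
      rcases t9 a b ha' hbT hA with ⟨rfl, rfl⟩ | h
      · exact absurd ha s6
      · exact Or.inr h
    · rcases s9 a b ha hbS hA with h | ⟨rfl, rfl⟩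
      · exact Or.inl h
      · exact absurd ha' t4
  have hy1 : y₁ ∉ S ∩ T := fun h => s4 h.1
  have hx1 : x₁ ∈ S ∩ T := by
    by_contra hx
    by_cases he : ∃ a b, a ∈ S ∩ T ∧ b ∉ S ∩ T ∧ G.Adj a b
    · obtain ⟨a, b, ha, hb, hA⟩ := he
      obtain ⟨a', b', ha', hb', hA', hn⟩ := nb _ a b ha hb hA
      rcases cr a b ha hb hA with ⟨rfl, rfl⟩ | ⟨rfl, rfl⟩
      · exact hx ha
      · rcases cr a' b' ha' hb' hA' with ⟨rfl, rfl⟩ | h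
        · exact hx ha'
        · exact hn h
    · have := adm0 G x₁ y₁ x₂ y₂ K c hc hK (S ∩ T)
        (fun a b ha hb hA => absurd ⟨a, b, ha, hb, hA⟩ he)
      rw [if_pos ⟨s2, t2⟩, if_pos ⟨s3, t3⟩, if_neg hx, if_neg hy1] at this
      norm_num at this
  obtain ⟨a', b', ha', hb', hA', hn⟩ := nb _ _ _ hx1 hy1 h1
  rcases cr a' b' ha' hb' hA' with h | ⟨rfl, rfl⟩
  · exact absurd h hn
  · exact ⟨S ∩ T, hx1, ⟨s2, t2⟩, ⟨s3, t3⟩, hy1, ha', hb', hA', hn, cr⟩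

lemma sub2 (G : SimpleGraph V) (nb : NB G) (x₁ y₁ x₂ y₂ : V) (h1 : G.Adj x₁ y₁)
    (hne : s(x₁, y₁) ≠ s(x₂, y₂))
    (noA : ∀ S, ¬ CutA G x₁ y₁ x₂ y₂ S)
    (S T : Set V) (p q u v : V) (hS : Bad1 G x₁ y₁ x₂ y₂ S p q) (hT : Bad1 G x₂ y₂ q p T u v) :
    Bad1 G x₂ y₂ x₁ y₁ T u v := by
  obtain ⟨s1, s2, s3, s4, s5, s6, s7, s8, s9⟩ := hS
  obtain ⟨t1, t2, t3, t4, t5, t6, t7, t8, t9⟩ := hT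
  by_cases hx : x₁ ∈ T <;> by_cases hy : y₁ ∈ T
  · exact ⟨t1, hx, hy, t4, t5, t6, t7, t8, t9⟩
  · exfalso
    refine noA T ⟨by tauto, by tauto, ?_⟩
    intro a b ha hb hA
    rcases t9 a b ha hb hA with ⟨rfl, rfl⟩ | ⟨rfl, rfl⟩
    · exact Or.inr rfl
    · rcases t9 _ _ hx hy h1 with ⟨rfl, rfl⟩ | ⟨rfl, rfl⟩
      · exact absurd rfl hne
      · exact Or.inl rfl
  · exfalso
    refine noA T ⟨by tauto, by tauto, ?_⟩
    intro a b ha hb hA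
    rcases t9 a b ha hb hA with ⟨rfl, rfl⟩ | ⟨rfl, rfl⟩
    · exact Or.inr rfl
    · rcases t9 _ _ hy hx h1.symm with ⟨rfl, rfl⟩ | ⟨rfl, rfl⟩
      · exact absurd Sym2.eq_swap hne
      · exact Or.inl Sym2.eq_swap
  · exfalso
    obtain ⟨a, b, ⟨ha, ha'⟩, hb, hA, hn⟩ := nb (T \ S) q p ⟨t2, s6⟩ (fun h => h.2 s5) s7.symm
    have huv : a = u ∧ b = v := by
      by_cases hbS : b ∈ S
      · rcases s9 b a hbS ha' hA.symm with ⟨rfl, rfl⟩ | ⟨rfl, rfl⟩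
        · exact absurd ha hy
        · exact absurd ⟨rfl, rfl⟩ hn
      · have hbT : b ∉ T := fun h => hb ⟨h, hbS⟩
        rcases t9 a b ha hbT hA with ⟨rfl, rfl⟩ | h
        · exact absurd s2 ha'
        · exact h
    obtain ⟨rfl, rfl⟩ := huv
    refine noA (S \ T) ⟨?_, ?_, ?_⟩
    · simp [s1, hx, s4]
    · simp [t1, s3, t4]
    · rintro c d ⟨hc, hc'⟩ hd hcd
      by_cases hdS : d ∈ S
      · have hdT : d ∈ T := by by_contra h; exact hd ⟨hdS, h⟩
        rcases t9 d c hdT hc' hcd.symm with ⟨rfl, rfl⟩ | ⟨rfl, rfl⟩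
        · exact Or.inr Sym2.eq_swap
        · exact absurd hdS ha'
      · rcases s9 c d hc hdS hcd with ⟨rfl, rfl⟩ | ⟨rfl, rfl⟩
        · exact Or.inl rfl
        · exact absurd t3 hc'

def Conc [Fintype V] (G : SimpleGraph V) (x₁ y₁ x₂ y₂ : V) : Prop :=
  ∃ F, FlowN G (NN x₁ y₁ x₂ y₂) F ∧ (∀ u v, |F u v| ≤ 5) ∧ |F x₂ y₂| = 1 ∧
    ∃ (a b : V) (p : G.Walk a b), p.IsPath ∧ (∀ u v, |F u v| = 5 → s(u,v) ∈ p.edges) ∧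
      ∀ u v, s(u,v) ∈ p.edges → |F u v| ≠ 1

lemma caseA [Fintype V] (G : SimpleGraph V)
    (ht : ∃ τ φ, IsNZFlow G allPos 5 τ φ) (x₁ y₁ x₂ y₂ : V) (h1 : G.Adj x₁ y₁) (h2 : G.Adj x₂ y₂)
    (hne : s(x₁, y₁) ≠ s(x₂, y₂)) (S : Set V) (hS : CutA G x₁ y₁ x₂ y₂ S) :
    Conc G x₁ y₁ x₂ y₂ := by
  obtain ⟨g, g1, g2, g3, g4, g5⟩ := flow_fix G ht x₁ y₁ h1
  obtain ⟨s1, s2, s3⟩ := hS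
  have hg : FlowN G (fun _ => False) g := ⟨g2, g5, fun u v => ⟨fun h => h.elim, fun _ => g1 u v⟩⟩
  have hF := switchN G _ (NN x₁ y₁ x₂ y₂) g S hg (by
    intro u v hA
    rw [false_iff]
    constructor
    · rintro (h | h) <;> rw [Sym2.eq_iff] at h <;> rcases h with ⟨rfl, rfl⟩ | ⟨rfl, rfl⟩ <;> tauto
    · intro h
      by_cases hu : u ∈ S
      · exact s3 u v hu (by tauto) hA
      · have := s3 v u (by tauto) hu hA.symm
        rwa [Sym2.eq_swap] at this)
  have hv := (F_to_K G x₁ y₁ x₂ y₂ _ hF h1 h2 hne).1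
  refine ⟨_, hF, ?_, ?_, x₁, x₁, Walk.nil, by simp, ?_, by simp⟩
  · intro u v
    rw [abs_switch]; exact (g3 u v).le
  · rw [hv, abs_neg, abs_switch, g4]; rfl
  · intro u v h
    rw [abs_switch] at h
    have := g3 u v
    omega

lemma Conc_swap [Fintype V] (G : SimpleGraph V) (x₁ y₁ x₂ y₂ : V) (h1 : G.Adj x₁ y₁)
    (h2 : G.Adj x₂ y₂) (hne : s(x₁, y₁) ≠ s(x₂, y₂)) (h : Conc G x₁ y₁ x₂ y₂) :
    Conc G x₂ y₂ x₁ y₁ := by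
  obtain ⟨F, hF, h3, h4, h5⟩ := h
  have hv := (F_to_K G x₁ y₁ x₂ y₂ _ hF h1 h2 hne).1
  refine ⟨F, ?_, h3, by rwa [hv, abs_neg] at h4, h5⟩
  have : NN x₂ y₂ x₁ y₁ = NN x₁ y₁ x₂ y₂ := by
    funext e; simp only [NN]; exact propext or_comm
  rw [this]; exact hF

lemma NN_switch (G : SimpleGraph V) (x₁ y₁ x₂ y₂ : V) (S : Set V) (p q : V)
    (hS : Bad1 G x₁ y₁ x₂ y₂ S p q) (u v : V) (hA : G.Adj u v) :
    (NN q p x₂ y₂ s(u,v) ↔ (NN x₁ y₁ x₂ y₂ s(u,v) ↔ (u ∈ S ↔ v ∈ S))) := by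
  obtain ⟨s1, s2, s3, s4, s5, s6, s7, s8, s9⟩ := hS
  have a1 := s9 u v
  have a2 := s9 v u
  have := hA.symm
  simp only [NN, Sym2.eq_iff]
  by_cases hu : u ∈ S <;> by_cases hv : v ∈ S <;> simp only [hu, hv] <;> grind

lemma Conc_step [Fintype V] (G : SimpleGraph V) (x₁ y₁ x₂ y₂ : V)
    (S : Set V) (p q : V) (hS : Bad1 G x₁ y₁ x₂ y₂ S p q) (h : Conc G q p x₂ y₂) :
    Conc G x₁ y₁ x₂ y₂ := by
  obtain ⟨F, hF, h3, h4, a, b, w, hw, h5, h6⟩ := h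
  have hF' := switchN G _ (NN x₁ y₁ x₂ y₂) F S hF (by
    intro u v hA
    have := NN_switch G x₁ y₁ x₂ y₂ S p q hS u v hA
    by_cases b1 : NN x₁ y₁ x₂ y₂ s(u, v) <;> by_cases b2 : NN q p x₂ y₂ s(u, v) <;>
      by_cases b3 : u ∈ S <;> by_cases b4 : v ∈ S <;> simp_all)
  refine ⟨_, hF', ?_, ?_, a, b, w, hw, ?_, ?_⟩
  · intro u v; rw [abs_switch]; exact h3 u v
  · rw [abs_switch]; exact h4
  · intro u v; rw [abs_switch]; exact h5 u v
  · intro u v; rw [abs_switch]; exact h6 u v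

def gAdj (G : SimpleGraph V) (x₁ y₁ x₂ y₂ : V) : V ⊕ Bool → V ⊕ Bool → Prop
  | Sum.inl u, Sum.inl v => G.Adj u v ∧ s(u,v) ≠ s(x₁,y₁) ∧ s(u,v) ≠ s(x₂,y₂)
  | Sum.inl u, Sum.inr false => u = x₁
  | Sum.inr false, Sum.inl u => u = x₁
  | Sum.inl u, Sum.inr true => u = x₂
  | Sum.inr true, Sum.inl u => u = x₂
  | Sum.inr a, Sum.inr b => a ≠ b

def gadget (G : SimpleGraph V) (x₁ y₁ x₂ y₂ : V) : SimpleGraph (V ⊕ Bool) where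
  Adj := gAdj G x₁ y₁ x₂ y₂
  symm := ⟨by
    rintro (u | _ | _) (v | _ | _) h <;> simp only [gAdj] at h ⊢ <;> try exact h
    · rw [Sym2.eq_swap]; exact ⟨h.1.symm, h.2⟩
    · simp
    · simp⟩
  loopless := ⟨by
    rintro (u | _ | _) h <;> simp [gAdj] at h⟩

lemma gadget_aux [Fintype V] (G : SimpleGraph V) (nb : NB G) (x₁ y₁ x₂ y₂ : V)
    (K : V → V → ℤ) (c : ℤ) (hc : c ≠ 0) (hK : FlowK G x₁ y₁ x₂ y₂ K c)
    (noA : ∀ S, ¬ CutA G x₁ y₁ x₂ y₂ S)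
    (noB1 : ∀ S p q, ¬ Bad1 G x₁ y₁ x₂ y₂ S p q)
    (noB2 : ∀ S p q, ¬ Bad1 G x₂ y₂ x₁ y₁ S p q)
    (T : Set (V ⊕ Bool)) (u v : V ⊕ Bool) (hu : u ∈ T) (hv : v ∉ T)
    (hA : gAdj G x₁ y₁ x₂ y₂ u v)
    (hun : ∀ a b, a ∈ T → b ∉ T → gAdj G x₁ y₁ x₂ y₂ a b → a = u ∧ b = v)
    (hx : Sum.inl x₁ ∈ T) : False := by
  have e1 : gAdj G x₁ y₁ x₂ y₂ (Sum.inl x₁) (Sum.inr false) := by simp [gAdj]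
  have e2 : gAdj G x₁ y₁ x₂ y₂ (Sum.inl x₂) (Sum.inr true) := by simp [gAdj]
  have e2' : gAdj G x₁ y₁ x₂ y₂ (Sum.inr true) (Sum.inl x₂) := by simp [gAdj]
  have e3 : gAdj G x₁ y₁ x₂ y₂ (Sum.inr false) (Sum.inr true) := by simp [gAdj]
  have e3' : gAdj G x₁ y₁ x₂ y₂ (Sum.inr true) (Sum.inr false) := by simp [gAdj]
  let S : Set V := {w | Sum.inl w ∈ T}
  have hxS : x₁ ∈ S := hx
  by_cases hx2 : Sum.inl x₂ ∈ T
  · have hx2S : x₂ ∈ S := hx2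
    have hf : Sum.inr false ∈ T := by
      by_contra hf
      have i1 := hun _ _ hx hf e1
      by_cases ht : Sum.inr true ∈ T
      · have i2 := hun _ _ ht hf e3'
        have := i1.1.trans i2.1.symm
        simp at this
      · have i2 := hun _ _ hx2 ht e2
        have := i1.2.trans i2.2.symm
        simp at this
    have ht : Sum.inr true ∈ T := by
      by_contra ht
      have i1 := hun _ _ hx2 ht e2
      have i2 := hun _ _ hf ht e3
      have := i1.1.trans i2.1.symm
      simp at this
    obtain ⟨v', rfl⟩ : ∃ v', v = Sum.inl v' := by
      rcases v with v' | _ | _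
      · exact ⟨v', rfl⟩
      · exact absurd hf hv
      · exact absurd ht hv
    obtain ⟨u', rfl⟩ : ∃ u', u = Sum.inl u' := by
      rcases u with u' | _ | _
      · exact ⟨u', rfl⟩
      · simp only [gAdj] at hA; subst hA; exact absurd hx hv
      · simp only [gAdj] at hA; subst hA; exact absurd hx2 hv
    have hu' : u' ∈ S := hu
    have hv' : v' ∉ S := hv
    simp only [gAdj] at hA
    have hun' : ∀ a b, a ∈ S → b ∉ S → G.Adj a b → s(a,b) ≠ s(x₁,y₁) → s(a,b) ≠ s(x₂,y₂) →
        a = u' ∧ b = v' := by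
      intro a b ha hb hab h1 h2
      have := hun (Sum.inl a) (Sum.inl b) ha hb ⟨hab, h1, h2⟩
      simpa using this
    by_cases hy1 : y₁ ∈ S <;> by_cases hy2 : y₂ ∈ S
    · obtain ⟨a, b, ha, hb, hab, hn⟩ := nb S u' v' hu' hv' hA.1
      refine hn (hun' a b ha hb hab ?_ ?_)
      · intro h; rw [Sym2.eq_iff] at h; rcases h with ⟨rfl, rfl⟩ | ⟨rfl, rfl⟩ <;> tauto
      · intro h; rw [Sym2.eq_iff] at h; rcases h with ⟨rfl, rfl⟩ | ⟨rfl, rfl⟩ <;> tauto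
    · refine noB2 S u' v' ⟨hx2S, hxS, hy1, hy2, hu', hv', hA.1, ?_, ?_⟩
      · rintro ⟨rfl, rfl⟩; exact hA.2.2 rfl
      · intro a b ha hb hab
        by_cases h2 : s(a,b) = s(x₂,y₂)
        · exact Or.inl (cross_eq S h2 ha hy2)
        · refine Or.inr (hun' a b ha hb hab ?_ h2)
          intro h; rw [Sym2.eq_iff] at h; rcases h with ⟨rfl, rfl⟩ | ⟨rfl, rfl⟩ <;> tauto
    · refine noB1 S u' v' ⟨hxS, hx2S, hy2, hy1, hu', hv', hA.1, ?_, ?_⟩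
      · rintro ⟨rfl, rfl⟩; exact hA.2.1 rfl
      · intro a b ha hb hab
        by_cases h2 : s(a,b) = s(x₁,y₁)
        · exact Or.inl (cross_eq S h2 ha hy1)
        · refine Or.inr (hun' a b ha hb hab h2 ?_)
          intro h; rw [Sym2.eq_iff] at h; rcases h with ⟨rfl, rfl⟩ | ⟨rfl, rfl⟩ <;> tauto
    · refine adm1 G x₁ y₁ x₂ y₂ K c hK S u' v' hu' hv' hA.1 hA.2.1 hA.2.2 ?_ ?_
      · intro a b ha hb hab
        by_cases h1 : s(a,b) = s(x₁,y₁)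
        · exact Or.inl h1
        by_cases h2 : s(a,b) = s(x₂,y₂)
        · exact Or.inr (Or.inl h2)
        obtain ⟨rfl, rfl⟩ := hun' a b ha hb hab h1 h2
        exact Or.inr (Or.inr rfl)
      · simp [hxS, hx2S, hy1, hy2]
  · have hx2S : x₂ ∉ S := hx2
    have hin : ¬ ∃ a b, u = Sum.inl a ∧ v = Sum.inl b := by
      rintro ⟨a, b, rfl, rfl⟩
      by_cases hf : Sum.inr false ∈ T
      · by_cases ht : Sum.inr true ∈ T
        · have := (hun _ _ ht hx2 e2').1
          simp at this
        · have := (hun _ _ hf ht e3).1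
          simp at this
      · have := (hun _ _ hx hf e1).2
        simp at this
    have hcr : ∀ a b, a ∈ S → b ∉ S → G.Adj a b → s(a,b) = s(x₁,y₁) ∨ s(a,b) = s(x₂,y₂) := by
      intro a b ha hb hab
      by_contra hcon
      rw [not_or] at hcon
      have := hun (Sum.inl a) (Sum.inl b) ha hb ⟨hab, hcon.1, hcon.2⟩
      exact hin ⟨a, b, this.1.symm, this.2.symm⟩
    have h0 := adm0 G x₁ y₁ x₂ y₂ K c hc hK S hcr
    refine noA S ⟨?_, ?_, hcr⟩
    · intro h
      by_cases hy1 : y₁ ∈ S <;> by_cases hy2 : y₂ ∈ S <;> simp [hxS, hx2S, hy1, hy2] at h0 h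
    · intro h
      by_cases hy1 : y₁ ∈ S <;> by_cases hy2 : y₂ ∈ S <;> simp [hxS, hx2S, hy1, hy2] at h0 h

lemma gadget_bridgeless [Fintype V] (G : SimpleGraph V) (nb : NB G) (x₁ y₁ x₂ y₂ : V)
    (K : V → V → ℤ) (c : ℤ) (hc : c ≠ 0) (hK : FlowK G x₁ y₁ x₂ y₂ K c)
    (noA : ∀ S, ¬ CutA G x₁ y₁ x₂ y₂ S)
    (noB1 : ∀ S p q, ¬ Bad1 G x₁ y₁ x₂ y₂ S p q)
    (noB2 : ∀ S p q, ¬ Bad1 G x₂ y₂ x₁ y₁ S p q) : Bridgeless (gadget G x₁ y₁ x₂ y₂) := by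
  rw [bridgeless_NB]
  intro T u v hu hv hA
  by_contra hcon
  push Not at hcon
  by_cases hx : Sum.inl x₁ ∈ T
  · exact gadget_aux G nb x₁ y₁ x₂ y₂ K c hc hK noA noB1 noB2 T u v hu hv hA
      (fun a b ha hb hab => hcon a b ha hb hab) hx
  · refine gadget_aux G nb x₁ y₁ x₂ y₂ K c hc hK noA noB1 noB2 Tᶜ v u hv (fun h => h hu)
      ((SimpleGraph.Adj.symm (G := gadget G x₁ y₁ x₂ y₂) hA)) ?_ hx
    intro a b ha hb hab
    have := hcon b a (by simpa using hb) ha ((SimpleGraph.Adj.symm (G := gadget G x₁ y₁ x₂ y₂) hab))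
    exact this.symm

lemma gadget_flow [Fintype V] (G : SimpleGraph V) (x₁ y₁ x₂ y₂ : V)
    (ht : ∃ τ φ, IsNZFlow (gadget G x₁ y₁ x₂ y₂) allPos 5 τ φ) :
    ∃ h : V → V → ℤ, (∀ u v, h v u = - h u v) ∧
      (∀ u v, h u v ≠ 0 ↔ G.Adj u v ∧ s(u,v) ≠ s(x₁,y₁) ∧ s(u,v) ≠ s(x₂,y₂)) ∧
      (∀ u v, |h u v| < 5) ∧
      ∀ v, ∑ w, h v w = (if v = x₂ then 1 else 0) - (if v = x₁ then 1 else 0) := by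
  obtain ⟨g, g1, g2, g3, g4, g5⟩ := flow_fix _ ht (Sum.inl x₁) (Sum.inr false) (by simp [gadget, gAdj])
  have g2' : ∀ u v, ¬ gAdj G x₁ y₁ x₂ y₂ u v → g u v = 0 := by
    intro u v h
    by_contra hc
    exact h ((g2 u v).1 hc)
  have ff : g (Sum.inr false) (Sum.inr false) = 0 := g2' _ _ (by simp [gAdj])
  have tt : g (Sum.inr true) (Sum.inr true) = 0 := g2' _ _ (by simp [gAdj])
  have r1 := g5 (Sum.inr false)
  have r2 := g5 (Sum.inr true)
  rw [Fintype.sum_sum_type, Fintype.sum_bool, Finset.sum_eq_single x₁] at r1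
  rotate_left
  · intro b _ hb; exact g2' _ _ (by simpa [gAdj] using hb)
  · simp
  rw [Fintype.sum_sum_type, Fintype.sum_bool, Finset.sum_eq_single x₂] at r2
  rotate_left
  · intro b _ hb; exact g2' _ _ (by simpa [gAdj] using hb)
  · simp
  have q1 := g1 (Sum.inl x₁) (Sum.inr false)
  have q2 := g1 (Sum.inr false) (Sum.inr true)
  have q3 := g1 (Sum.inr true) (Sum.inl x₂)
  refine ⟨fun u v => g (Sum.inl u) (Sum.inl v), fun u v => g1 _ _, ?_, fun u v => g3 _ _, ?_⟩
  · intro u v; exact g2 _ _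
  · intro v
    have r := g5 (Sum.inl v)
    rw [Fintype.sum_sum_type, Fintype.sum_bool] at r
    have a1 : g (Sum.inl v) (Sum.inr false) = if v = x₁ then 1 else 0 := by
      split_ifs with h
      · rw [h, g4]
      · exact g2' _ _ (by simpa [gAdj] using h)
    have a2 : g (Sum.inl v) (Sum.inr true) = if v = x₂ then -1 else 0 := by
      split_ifs with h
      · rw [h]; omega
      · exact g2' _ _ (by simpa [gAdj] using h)
    rw [a1, a2] at r
    split_ifs at r ⊢ <;> linarith

lemma negsum_unique {ι : Type} [Fintype ι] (f : ι → ℤ) (hf : ∀ i, f i ≤ 0) (hs : ∑ i, f i = -1) :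
    ∃ i, f i ≠ 0 ∧ ∀ j, f j ≠ 0 → j = i := by
  have : ∃ i, f i ≠ 0 := by
    by_contra hc
    push Not at hc
    simp [hc] at hs
  obtain ⟨i, hi⟩ := this
  refine ⟨i, hi, ?_⟩
  intro j hj
  by_contra hne
  rw [← Finset.add_sum_erase _ _ (Finset.mem_univ i),
    ← Finset.add_sum_erase _ _ (Finset.mem_erase.2 ⟨hne, Finset.mem_univ j⟩)] at hs
  have : ∑ x ∈ (Finset.univ.erase i).erase j, f x ≤ 0 := Finset.sum_nonpos fun x _ => hf x
  have := hf i
  have := hf j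
  omega

lemma dir_reach [Fintype V] (G : SimpleGraph V) (nb : NB G) (x₁ y₁ x₂ y₂ : V)
    (h1 : G.Adj x₁ y₁) (h2 : G.Adj x₂ y₂)
    (K : V → V → ℤ) (c : ℤ) (hK : FlowK G x₁ y₁ x₂ y₂ K c)
    (h : V → V → ℤ) (hanti : ∀ u v, h v u = - h u v)
    (hA : ∀ u v, h u v ≠ 0 ↔ G.Adj u v ∧ s(u,v) ≠ s(x₁,y₁) ∧ s(u,v) ≠ s(x₂,y₂))
    (hrow : ∀ v, ∑ w, h v w = (if v = x₂ then 1 else 0) - (if v = x₁ then 1 else 0)) :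
    Relation.ReflTransGen (fun u v => 0 < h u v) y₂ y₁ := by
  by_contra hcon
  let S : Set V := {y | Relation.ReflTransGen (fun u v => 0 < h u v) y₂ y}
  have hy2 : y₂ ∈ S := Relation.ReflTransGen.refl
  have hy1 : y₁ ∉ S := hcon
  have hle : ∀ u v, u ∈ S → v ∉ S → h u v ≤ 0 := by
    intro u v hu hv
    by_contra hc
    exact hv (Relation.ReflTransGen.tail hu (by omega))
  have hcut := cut_sum h hanti S
  have hl : ∑ v, (if v ∈ S then ∑ w, h v w else 0) =
      (if x₂ ∈ S then 1 else 0) - (if x₁ ∈ S then 1 else 0) := by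
    have key : ∀ x : V, ∑ v, (if v ∈ S then (if v = x then (1:ℤ) else 0) else 0) =
        if x ∈ S then 1 else 0 := by
      intro x
      rw [Finset.sum_eq_single x]
      · simp
      · intro v _ hv; simp [hv]
      · simp
    rw [← key x₁, ← key x₂, ← Finset.sum_sub_distrib]
    refine Finset.sum_congr rfl fun v _ => ?_
    rw [hrow]
    by_cases hv : v ∈ S <;> simp [hv]
  rw [hl, ← Fintype.sum_prod_type' (f := fun v w => if v ∈ S ∧ w ∉ S then h v w else 0)] at hcut
  have hnp : ∀ x : V × V, (if x.1 ∈ S ∧ x.2 ∉ S then h x.1 x.2 else 0) ≤ 0 := by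
    intro x
    split_ifs with hx
    · exact hle _ _ hx.1 hx.2
    · exact le_rfl
  have hz : ∑ x : V × V, (if x.1 ∈ S ∧ x.2 ∉ S then h x.1 x.2 else 0) = 0 →
      ∀ u v, u ∈ S → v ∉ S → G.Adj u v → s(u,v) = s(x₁,y₁) ∨ s(u,v) = s(x₂,y₂) := by
    intro h0 u v hu hv huv
    have := (Finset.sum_eq_zero_iff_of_nonpos (fun x _ => hnp x)).1 h0 (u, v) (Finset.mem_univ _)
    simp only [hu, hv, not_false_iff, and_self, if_true] at this
    by_contra hc
    rw [not_or] at hc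
    exact (hA u v).2 ⟨huv, hc⟩ this
  by_cases hx1 : x₁ ∈ S <;> by_cases hx2 : x₂ ∈ S
  · rw [if_pos hx1, if_pos hx2] at hcut
    obtain ⟨a, b, ha, hb, hab, hn⟩ := nb S x₁ y₁ hx1 hy1 h1
    rcases hz (by omega) a b ha hb hab with h | h
    · exact hn (cross_eq S h ha hy1)
    · rw [Sym2.eq_iff] at h; rcases h with ⟨rfl, rfl⟩ | ⟨rfl, rfl⟩ <;> tauto
  · rw [if_pos hx1, if_neg hx2] at hcut
    obtain ⟨⟨p, q⟩, hpq, hu⟩ := negsum_unique _ hnp (by omega)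
    simp only at hpq hu
    have hpq' : p ∈ S ∧ q ∉ S := by
      by_contra hc
      rw [if_neg hc] at hpq; exact hpq rfl
    rw [if_pos hpq'] at hpq
    have hpA := (hA p q).1 hpq
    refine adm1 G x₁ y₁ x₂ y₂ K c hK S p q hpq'.1 hpq'.2 hpA.1 hpA.2.1 hpA.2.2 ?_ ?_
    · intro a b ha hb hab
      by_cases h1 : s(a,b) = s(x₁,y₁)
      · exact Or.inl h1
      by_cases h2 : s(a,b) = s(x₂,y₂)
      · exact Or.inr (Or.inl h2)
      have := hu (a, b) (by rw [if_pos ⟨ha, hb⟩]; exact (hA a b).2 ⟨hab, h1, h2⟩)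
      rw [Prod.mk.injEq] at this
      rw [this.1, this.2]; simp
    · simp [hx1, hx2, hy1, hy2]
  · rw [if_neg hx1, if_pos hx2] at hcut
    have : ∑ x : V × V, (if x.1 ∈ S ∧ x.2 ∉ S then h x.1 x.2 else 0) ≤ 0 :=
      Finset.sum_nonpos fun x _ => hnp x
    omega
  · rw [if_neg hx1, if_neg hx2] at hcut
    obtain ⟨a, b, ha, hb, hab, hn⟩ := nb S y₂ x₂ hy2 hx2 h2.symm
    rcases hz (by omega) a b ha hb hab with h | h
    · rw [Sym2.eq_iff] at h; rcases h with ⟨rfl, rfl⟩ | ⟨rfl, rfl⟩ <;> tauto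
    · rw [Sym2.eq_swap (a := x₂)] at h
      exact hn (cross_eq S h ha hx2)

lemma caseB [Fintype V] (G : SimpleGraph V) (nb : NB G) (x₁ y₁ x₂ y₂ : V)
    (h1 : G.Adj x₁ y₁) (h2 : G.Adj x₂ y₂) (hne : s(x₁, y₁) ≠ s(x₂, y₂))
    (K : V → V → ℤ) (c : ℤ) (hK : FlowK G x₁ y₁ x₂ y₂ K c)
    (ht : ∃ τ φ, IsNZFlow (gadget G x₁ y₁ x₂ y₂) allPos 5 τ φ) : Conc G x₁ y₁ x₂ y₂ := by
  obtain ⟨h, hanti, hA, hlt, hrow⟩ := gadget_flow G x₁ y₁ x₂ y₂ ht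
  have hr := dir_reach G nb x₁ y₁ x₂ y₂ h1 h2 K c hK h hanti hA hrow
  obtain ⟨p, P, hp, p1, p2, p3⟩ := pathflow G (fun u v => 0 < h u v)
    (fun u v huv => ((hA u v).1 (ne_of_gt huv)).1) hr
  have hval : ∀ u v, (h u v + P u v = h u v ∧ s(u,v) ∉ p.edges) ∨
      (0 < h u v ∧ h u v + P u v = h u v + 1 ∧ s(u,v) ∈ p.edges) ∨
      (h u v < 0 ∧ h u v + P u v = h u v - 1 ∧ s(u,v) ∈ p.edges) := by
    intro u v
    have := hanti u v
    rcases p3 u v with ⟨a, b, c⟩ | ⟨a, b, c⟩ | ⟨a, b⟩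
    · exact Or.inr (Or.inl ⟨b, by rw [a], c⟩)
    · exact Or.inr (Or.inr ⟨by omega, by rw [a]; ring, c⟩)
    · exact Or.inl ⟨by rw [a]; ring, b⟩
  have hK' : FlowK G x₁ y₁ x₂ y₂ (fun u v => h u v + P u v) 1 := by
    refine ⟨?_, ?_, ?_⟩
    · intro u v; show h v u + P v u = - (h u v + P u v); rw [hanti u v, p1 u v]; ring
    · intro u v
      show h u v + P u v ≠ 0 ↔ _
      rw [← hA]
      have := hval u v
      omega
    · intro v
      rw [Finset.sum_add_distrib, hrow, p2]; ring
  obtain ⟨F, hF, f1, f2, f3⟩ := K_to_F G x₁ y₁ x₂ y₂ _ hK' h1 h2 hne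
  refine ⟨F, hF, ?_, by rw [f2 _ _ rfl]; rfl, y₂, y₁, p, hp, ?_, ?_⟩
  · intro u v
    by_cases e1 : s(u,v) = s(x₁,y₁)
    · rw [f1 u v e1]; norm_num
    by_cases e2 : s(u,v) = s(x₂,y₂)
    · rw [f2 u v e2]; norm_num
    rw [f3 u v e1 e2]
    have a1 := hlt u v
    have a2 := hval u v
    rw [abs_lt] at a1
    rw [abs_le]
    omega
  · intro u v h5
    by_cases e1 : s(u,v) = s(x₁,y₁)
    · rw [f1 u v e1] at h5; norm_num at h5
    by_cases e2 : s(u,v) = s(x₂,y₂)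
    · rw [f2 u v e2] at h5; norm_num at h5
    rw [f3 u v e1 e2] at h5
    have a1 := hlt u v
    rcases hval u v with ⟨a, b⟩ | ⟨a, b, c⟩ | ⟨a, b, c⟩
    · simp only [a] at h5; omega
    · exact c
    · exact c
  · intro u v he
    have hh : h u v ≠ 0 := by
      rcases hval u v with ⟨a, b⟩ | ⟨a, b, c⟩ | ⟨a, b, c⟩
      · exact absurd he b
      · omega
      · omega
    have e := (hA u v).1 hh
    rw [f3 u v e.2.1 e.2.2]
    show |h u v + P u v| ≠ 1
    rcases hval u v with ⟨a, b⟩ | ⟨a, b, c⟩ | ⟨a, b, c⟩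
    · exact absurd he b
    · rw [b, abs_of_pos] <;> omega
    · rw [b, abs_of_neg] <;> omega

def BadSet (G : SimpleGraph V) (x₁ y₁ x₂ y₂ : V) : Set (Sym2 V) :=
  {e | ∃ S u v, e = s(u,v) ∧ (Bad1 G x₁ y₁ x₂ y₂ S u v ∨ Bad1 G x₂ y₂ x₁ y₁ S u v)}

lemma BadSet_swap (G : SimpleGraph V) (x₁ y₁ x₂ y₂ : V) :
    BadSet G x₂ y₂ x₁ y₁ = BadSet G x₁ y₁ x₂ y₂ := by
  ext e
  simp only [BadSet, Set.mem_setOf_eq]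
  constructor <;> rintro ⟨S, u, v, he, h⟩ <;> exact ⟨S, u, v, he, h.symm⟩

lemma CutA_swap (G : SimpleGraph V) (x₁ y₁ x₂ y₂ : V) (S : Set V) (h : CutA G x₁ y₁ x₂ y₂ S) :
    CutA G x₂ y₂ x₁ y₁ S :=
  ⟨h.2.1, h.1, fun a b ha hb hab => (h.2.2 a b ha hb hab).symm⟩

lemma core_s18 (tutte : ∀ (W : Type) [Fintype W] (H : SimpleGraph W), Bridgeless H →
      ∃ τ φ, IsNZFlow H allPos 5 τ φ)
    [Fintype V] (G : SimpleGraph V) (hbl : Bridgeless G) (n : ℕ) :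
    ∀ (x₁ y₁ x₂ y₂ : V), (BadSet G x₁ y₁ x₂ y₂).ncard = n → G.Adj x₁ y₁ → G.Adj x₂ y₂ →
      s(x₁, y₁) ≠ s(x₂, y₂) → (∃ F, FlowN G (NN x₁ y₁ x₂ y₂) F) → Conc G x₁ y₁ x₂ y₂ := by
  have nb := (bridgeless_NB G).1 hbl
  induction n using Nat.strong_induction_on with
  | _ n ih =>
  have step : ∀ (x₁ y₁ x₂ y₂ : V), (BadSet G x₁ y₁ x₂ y₂).ncard = n → G.Adj x₁ y₁ → G.Adj x₂ y₂ →
      s(x₁, y₁) ≠ s(x₂, y₂) → (∃ F, FlowN G (NN x₁ y₁ x₂ y₂) F) →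
      (∀ S, ¬ CutA G x₁ y₁ x₂ y₂ S) →
      (∃ S p q, Bad1 G x₁ y₁ x₂ y₂ S p q) → Conc G x₁ y₁ x₂ y₂ := by
    rintro x₁ y₁ x₂ y₂ hn h1 h2 hne ⟨F, hF⟩ noA ⟨S, p, q, hB⟩
    obtain ⟨-, K, hK⟩ := F_to_K G x₁ y₁ x₂ y₂ F hF h1 h2 hne
    have hc : F x₁ y₁ ≠ 0 := (hF.1 _ _).2 h1
    refine Conc_step G x₁ y₁ x₂ y₂ S p q hB ?_
    have hB' := hB
    obtain ⟨s1, s2, s3, s4, s5, s6, s7, s8, s9⟩ := hB'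
    refine ih _ ?_ q p x₂ y₂ rfl s7.symm h2 ?_ ?_
    · rw [← hn]
      refine Set.ncard_lt_ncard ⟨?_, ?_⟩ (Set.toFinite _)
      · rintro e ⟨T, u, v, rfl, hT | hT⟩
        · obtain ⟨S', hS'⟩ := sub1 G nb x₁ y₁ x₂ y₂ h1 K _ hc hK S T p q u v hB hT
          exact ⟨S', u, v, rfl, Or.inl hS'⟩
        · exact ⟨T, u, v, rfl, Or.inr (sub2 G nb x₁ y₁ x₂ y₂ h1 hne noA S T p q u v hB hT)⟩
      · intro hsub
        have hm : s(p,q) ∈ BadSet G x₁ y₁ x₂ y₂ := ⟨S, p, q, rfl, Or.inl hB⟩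
        obtain ⟨T, u, v, he, hT | hT⟩ := hsub hm
        · obtain ⟨t1, t2, t3, t4, t5, t6, t7, t8, t9⟩ := hT
          refine t8 (cross_eq T ?_ t5 t4)
          rw [← he, Sym2.eq_swap]
        · obtain ⟨t1, t2, t3, t4, t5, t6, t7, t8, t9⟩ := hT
          rw [Sym2.eq_iff] at he
          rcases he with ⟨rfl, rfl⟩ | ⟨rfl, rfl⟩ <;> tauto
    · intro h
      rw [Sym2.eq_iff] at h
      rcases h with ⟨rfl, rfl⟩ | ⟨rfl, rfl⟩ <;> tauto
    · exact ⟨_, switchN G _ _ F S hF (NN_switch G x₁ y₁ x₂ y₂ S p q hB)⟩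
  intro x₁ y₁ x₂ y₂ hn h1 h2 hne hF
  by_cases hA : ∃ S, CutA G x₁ y₁ x₂ y₂ S
  · obtain ⟨S, hS⟩ := hA
    exact caseA G (tutte V G hbl) x₁ y₁ x₂ y₂ h1 h2 hne S hS
  push Not at hA
  by_cases hB1 : ∃ S p q, Bad1 G x₁ y₁ x₂ y₂ S p q
  · exact step x₁ y₁ x₂ y₂ hn h1 h2 hne hF hA hB1
  by_cases hB2 : ∃ S p q, Bad1 G x₂ y₂ x₁ y₁ S p q
  · refine Conc_swap G x₂ y₂ x₁ y₁ h2 h1 hne.symm ?_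
    refine step x₂ y₂ x₁ y₁ (by rw [BadSet_swap]; exact hn) h2 h1 hne.symm ?_ ?_ hB2
    · obtain ⟨F, hF⟩ := hF
      have : NN x₂ y₂ x₁ y₁ = NN x₁ y₁ x₂ y₂ := by
        funext e; simp only [NN]; exact propext or_comm
      exact ⟨F, by rw [this]; exact hF⟩
    · intro S hS; exact hA S (CutA_swap _ _ _ _ _ _ hS)
  push Not at hB1 hB2
  obtain ⟨F, hF⟩ := hF
  obtain ⟨-, K, hK⟩ := F_to_K G x₁ y₁ x₂ y₂ F hF h1 h2 hne
  have hc : F x₁ y₁ ≠ 0 := (hF.1 _ _).2 h1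
  exact caseB G nb x₁ y₁ x₂ y₂ h1 h2 hne K _ hK
    (tutte _ _ (gadget_bridgeless G nb x₁ y₁ x₂ y₂ K _ hc hK hA hB1 hB2))

/-- If Tutte's 5-flow conjecture holds, then every bridgeless
flow-admissible signed graph with exactly two negative edges admits a nowhere-zero 6-flow
with all values positive, value 1 on both negative edges, and a path containing all edges
of value 5 and no edge of value 1. -/
theorem stmt18
    (tutte : ∀ (W : Type) [Fintype W] (H : SimpleGraph W), Bridgeless H →
      ∃ τ φ, IsNZFlow H allPos 5 τ φ)
    {V : Type} [Fintype V] (G : SimpleGraph V) (σ : Sym2 V → ℤ)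
    (hσ : IsSignature G σ) (hbl : Bridgeless G) (hadm : FlowAdmissible G σ)
    (n₁ n₂ : Sym2 V) (hne : n₁ ≠ n₂) (hN : NegEdges G σ = {n₁, n₂}) :
    ∃ τ φ, IsNZFlow G σ 6 τ φ ∧ (∀ e ∈ G.edgeSet, 0 < φ e) ∧
      φ n₁ = 1 ∧ φ n₂ = 1 ∧
      ∃ (a b : V) (p : G.Walk a b), p.IsPath ∧
        (∀ e ∈ G.edgeSet, φ e = 5 → e ∈ p.edges) ∧
        (∀ e ∈ p.edges, φ e ≠ 1) := by
  induction n₁ with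
  | _ x₁ y₁ =>
  induction n₂ with
  | _ x₂ y₂ =>
  have hm1 : s(x₁, y₁) ∈ NegEdges G σ := by rw [hN]; simp
  have hm2 : s(x₂, y₂) ∈ NegEdges G σ := by rw [hN]; simp
  have h1 : G.Adj x₁ y₁ := hm1.1
  have h2 : G.Adj x₂ y₂ := hm2.1
  have hNN : ∀ u v, G.Adj u v → (NN x₁ y₁ x₂ y₂ s(u,v) ↔ σ s(u,v) = -1) := by
    intro u v hA
    have : s(u,v) ∈ NegEdges G σ ↔ s(u,v) ∈ ({s(x₁,y₁), s(x₂,y₂)} : Set (Sym2 V)) := by rw [hN]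
    simp only [NegEdges, Set.mem_setOf_eq, Set.mem_insert_iff, Set.mem_singleton_iff,
      mem_edgeSet, hA, true_and] at this
    exact this.symm
  have hF0 : ∃ F, FlowN G (NN x₁ y₁ x₂ y₂) F := by
    obtain ⟨k, τ, φ, ⟨⟨ht, hor⟩, hsum⟩, hnz⟩ := hadm
    refine ⟨fun v w => if G.Adj v w then τ v s(v, w) * φ s(v, w) else 0, ?_, hsum, ?_⟩
    · intro u v
      by_cases hA : G.Adj u v
      · have := (hnz s(u,v) hA).1
        rw [abs_pos] at this
        rcases ht u s(u,v) with h | h <;> simp [hA, h, this]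
      · simp [hA]
    · intro u v
      by_cases hA : G.Adj u v
      · have hA' := hA.symm
        have h3 := hor u v hA
        have hs : s(v,u) = s(u,v) := Sym2.eq_swap
        rw [hNN u v hA]
        simp only [hA, hA', if_true, hs]
        have h4 := hσ s(u,v) hA
        rcases ht u s(u,v) with h | h <;> rcases ht v s(u,v) with h' | h' <;>
          rw [h, h'] at h3 ⊢ <;> constructor <;> intro h5 <;> omega
      · have hA' : ¬ G.Adj v u := fun h => hA h.symm
        simp [hA, hA']
  obtain ⟨F, hF, hle, hv2, a, b, p, hp, p5, p1⟩ := core_s18 tutte G hbl _ x₁ y₁ x₂ y₂ rfl h1 h2 hne hF0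
  have hv1 : |F x₁ y₁| = 1 := by
    have := (F_to_K G x₁ y₁ x₂ y₂ F hF h1 h2 hne).1
    rwa [this, abs_neg] at hv2
  obtain ⟨hA, hrow, hsym⟩ := hF
  have habs : ∀ u v, |F u v| = |F v u| := by
    intro u v
    by_cases h : NN x₁ y₁ x₂ y₂ s(u,v)
    · rw [(hsym u v).1 h]
    · rw [(hsym u v).2 h, abs_neg]
  let φ : Sym2 V → ℤ := Sym2.lift ⟨fun u v => |F u v|, habs⟩
  have hφ : ∀ u v, φ s(u,v) = |F u v| := fun u v => rfl
  let τ : V → Sym2 V → ℤ := fun v e => if ∃ w, e = s(v,w) ∧ F v w < 0 then -1 else 1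
  have hτ : ∀ v w, τ v s(v,w) = if F v w < 0 then -1 else 1 := by
    intro v w
    have : (∃ w', s(v,w) = s(v,w') ∧ F v w' < 0) ↔ F v w < 0 := by
      constructor
      · rintro ⟨w', h, h'⟩
        rw [Sym2.congr_right] at h
        rwa [h]
      · intro h; exact ⟨w, rfl, h⟩
    show (if ∃ w', s(v,w) = s(v,w') ∧ F v w' < 0 then -1 else 1) = _
    simp only [this]
  have hpos : ∀ e ∈ G.edgeSet, 0 < φ e := by
    intro e he
    induction e with
    | _ u v =>
    rw [hφ, abs_pos]; exact (hA u v).2 he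
  refine ⟨τ, φ, ⟨⟨⟨?_, ?_⟩, ?_⟩, ?_⟩, hpos, hv1, hv2, a, b, p, hp, ?_, ?_⟩
  · intro v e
    show (if ∃ w, e = s(v,w) ∧ F v w < 0 then (-1:ℤ) else 1) = 1 ∨
      (if ∃ w, e = s(v,w) ∧ F v w < 0 then (-1:ℤ) else 1) = -1
    split_ifs <;> simp
  · intro u v huv
    have hs : s(u,v) = s(v,u) := Sym2.eq_swap
    have e2 : τ v s(u,v) = if F v u < 0 then -1 else 1 := by rw [hs, hτ]
    rw [hτ, e2]
    have h3 := hsym u v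
    rw [hNN u v huv] at h3
    have h4 := (hA u v).2 huv
    rcases hσ s(u,v) huv with h5 | h5
    · have := h3.2 (by omega)
      rw [h5]
      split_ifs <;> omega
    · have := h3.1 h5
      rw [h5]
      split_ifs <;> omega
  · intro v
    refine Eq.trans (Finset.sum_congr rfl fun w _ => ?_) (hrow v)
    by_cases hvw : G.Adj v w
    · rw [if_pos hvw, hτ, hφ]
      split_ifs with h
      · rw [abs_of_neg h]; ring
      · rw [abs_of_nonneg (by omega)]; ring
    · rw [if_neg hvw]
      by_contra hc
      exact hvw ((hA v w).1 (Ne.symm hc))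
  · intro e he
    have h3 := hpos e he
    rw [abs_of_pos h3]
    refine ⟨h3, ?_⟩
    induction e with
    | _ u v =>
    have := hle u v
    rw [hφ]; omega
  · intro e he h5
    induction e with
    | _ u v => exact p5 u v h5
  · intro e he
    induction e with
    | _ u v => exact p1 u v he
end
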